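/- arXiv:hep-th/9601135 — 13 statements merged into one kernel-verified Lean document; each statement's English description precedes it below -/
import Mathlib

section
/- Let ν, α, β₁, β₂ ∈ ℂ with sinh(ν(πi−β₁+β₂)) ≠ 0. Then b̄(β₁−β₂)·sinh(ν(α−β₁+πi/2)) + c̄(β₁−β₂)·sinh(ν(β₂−α+πi/2)) = sinh(ν(β₁−α+πi/2)). -/
noncomputable def bbar (ν β : ℂ) : ℂ :=
  Complex.sinh (ν * β) / Complex.sinh (ν * (Real.pi * Complex.I - β))

noncomputable def cbar (ν β : ℂ) : ℂ :=
  Complex.sinh (ν * (Real.pi * Complex.I)) / Complex.sinh (ν * (Real.pi * Complex.I - β))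

theorem sinh_mul_sinh_add_sinh_mul_sinh (x y z : ℂ) :
    Complex.sinh x * Complex.sinh y + Complex.sinh (x + y + z) * Complex.sinh z
      = Complex.sinh (x + z) * Complex.sinh (y + z) := by
  simp only [Complex.sinh_add, Complex.cosh_add]
  linear_combination -Complex.sinh x * Complex.sinh y * Complex.cosh_sq_sub_sinh_sq z

/-- The exchange identity
`b̄(β₁-β₂)·sinh(ν(α-β₁+πi/2)) + c̄(β₁-β₂)·sinh(ν(β₂-α+πi/2)) = sinh(ν(β₁-α+πi/2))`. -/
theorem qKZ_exchange_identity (ν α β₁ β₂ : ℂ)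
    (h : Complex.sinh (ν * (Real.pi * Complex.I - β₁ + β₂)) ≠ 0) :
    bbar ν (β₁ - β₂) * Complex.sinh (ν * (α - β₁ + Real.pi * Complex.I / 2))
      + cbar ν (β₁ - β₂) * Complex.sinh (ν * (β₂ - α + Real.pi * Complex.I / 2))
      = Complex.sinh (ν * (β₁ - α + Real.pi * Complex.I / 2)) := by
  have hden : Real.pi * Complex.I - (β₁ - β₂) = Real.pi * Complex.I - β₁ + β₂ := by ring
  rw [bbar, cbar, hden, div_mul_eq_mul_div, div_mul_eq_mul_div, ← add_div, div_eq_iff h]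
  set x := ν * (β₁ - β₂) with hx
  set y := ν * (α - β₁ + Real.pi * Complex.I / 2) with hy
  set z := ν * (β₂ - α + Real.pi * Complex.I / 2) with hz
  have hxyz : ν * (Real.pi * Complex.I) = x + y + z := by rw [hx, hy, hz]; ring
  have hxz : ν * (β₁ - α + Real.pi * Complex.I / 2) = x + z := by rw [hx, hz]; ring
  have hyz : ν * (Real.pi * Complex.I - β₁ + β₂) = y + z := by rw [hy, hz]; ring
  rw [hxyz, hxz, hyz, sinh_mul_sinh_add_sinh_mul_sinh]
end

section
/- Let ν, α, α′, β, β′ ∈ ℂ with sinh(ν(α−α′−πi)) ≠ 0 and sinh(ν(α′−α−πi)) ≠ 0. Define B(α,α′;β,β′) = sinh(ν(α′−β+πi/2))·sinh(ν(β′−α+πi/2))/sinh(ν(α−α′−πi)) − sinh(ν(α−β+πi/2))·sinh(ν(β′−α′+πi/2))/sinh(ν(α′−α−πi)). Then B(α,α′;β,β′) = B(α,α′;β′,β); that is, the antisymmetrization in α, α′ of the kernel sinh(ν(α′−β+πi/2))sinh(ν(β′−α+πi/2))/sinh(ν(α−α′−πi)) is symmetric under the exchange of β and β′. -/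
/-!
Exchanging `β` and `β'` changes the kernel `K(α, α'; β, β')` by exactly `sinh (ν (β - β'))`.
This does not depend on `α` and `α'`, so it cancels in the antisymmetrization of `K` in `α, α'`.
-/

/-- The antisymmetrization in `α, α'` of the kernel
`sinh(ν(α'-β+πi/2))·sinh(ν(β'-α+πi/2)) / sinh(ν(α-α'-πi))`. -/
noncomputable def Bker (ν α α' β β' : ℂ) : ℂ :=
  Complex.sinh (ν * (α' - β + Real.pi * Complex.I / 2)) *
      Complex.sinh (ν * (β' - α + Real.pi * Complex.I / 2)) /
      Complex.sinh (ν * (α - α' - Real.pi * Complex.I))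
    - Complex.sinh (ν * (α - β + Real.pi * Complex.I / 2)) *
      Complex.sinh (ν * (β' - α' + Real.pi * Complex.I / 2)) /
      Complex.sinh (ν * (α' - α - Real.pi * Complex.I))

open Complex

/-- The kernel `K(α, α'; β, β')` whose antisymmetrization in `α, α'` is `Bker`. -/
noncomputable def sinhKernel (ν α α' β β' : ℂ) : ℂ :=
  sinh (ν * (α' - β + Real.pi * I / 2)) * sinh (ν * (β' - α + Real.pi * I / 2)) /
    sinh (ν * (α - α' - Real.pi * I))

theorem Bker_eq_sinhKernel_sub (ν α α' β β' : ℂ) :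
    Bker ν α α' β β' = sinhKernel ν α α' β β' - sinhKernel ν α' α β β' :=
  rfl

theorem sinh_mul_sinh_sub_sinh_sub_mul_sinh_sub (x y d : ℂ) :
    sinh x * sinh y - sinh (x - d) * sinh (y - d) = sinh (x + y - d) * sinh d := by
  simp only [sinh_sub, sinh_add, cosh_add]
  linear_combination (-sinh x * sinh y) * cosh_sq d

theorem sinhKernel_sub_swap (ν α α' β β' : ℂ)
    (h : sinh (ν * (α - α' - Real.pi * I)) ≠ 0) :
    sinhKernel ν α α' β β' - sinhKernel ν α α' β' β = sinh (ν * (β - β')) := by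
  set x := ν * (α' - β + Real.pi * I / 2) with hx
  set y := ν * (β' - α + Real.pi * I / 2) with hy
  set d := ν * (β' - β) with hd
  have x_swap : ν * (α' - β' + Real.pi * I / 2) = x - d := by rw [hx, hd]; ring
  have y_swap : ν * (β - α + Real.pi * I / 2) = y - d := by rw [hy, hd]; ring
  have denom_eq : ν * (α - α' - Real.pi * I) = -(x + y - d) := by rw [hx, hy, hd]; ring
  have diff_eq : ν * (β - β') = -d := by rw [hd]; ring
  rw [sinhKernel, sinhKernel, ← sub_div, div_eq_iff h, x_swap, y_swap, denom_eq, diff_eq,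
    sinh_neg, sinh_neg, neg_mul_neg, mul_comm (sinh d)]
  exact sinh_mul_sinh_sub_sinh_sub_mul_sinh_sub x y d

/-- The antisymmetrized kernel is symmetric under exchange of `β` and `β'`. -/
theorem Bker_symm (ν α α' β β' : ℂ)
    (h₁ : Complex.sinh (ν * (α - α' - Real.pi * Complex.I)) ≠ 0)
    (h₂ : Complex.sinh (ν * (α' - α - Real.pi * Complex.I)) ≠ 0) :
    Bker ν α α' β β' = Bker ν α α' β' β := by
  have swap := sinhKernel_sub_swap ν α α' β β' h₁
  have swap' := sinhKernel_sub_swap ν α' α β β' h₂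
  rw [Bker_eq_sinhKernel_sub, Bker_eq_sinhKernel_sub, sub_eq_sub_iff_sub_eq_sub, swap, swap']
end

section
/- Let 0 < ν < 1 and λ > 0 be real. For β ∈ ℝ define κ(β) = exp(−i·∫₀^∞ (dt/t)·sin(2βνt/π)·sinh((1−ν)t)/(sinh t · cosh νt)) and ρ̂(β) = exp(∫₀^∞ (dt/t)·sin²((β−iλ/2)νt/π)·sinh((1−ν)t)/(cosh νt · sinh t · sinh(λνt/π))). Then both integrals converge absolutely for every β ∈ ℝ, and ρ̂(β)/ρ̂(−β) = κ(β) for all β ∈ ℝ. -/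
open MeasureTheory

/-- The integrand in the definition of `κ(β)`. -/
noncomputable def kappaInt (ν β t : ℝ) : ℝ :=
  (1 / t) * Real.sin (2 * β * ν * t / Real.pi) * Real.sinh ((1 - ν) * t) /
    (Real.sinh t * Real.cosh (ν * t))

/-- `κ(β) = exp(-i ∫₀^∞ dt/t · sin(2βνt/π) sinh((1-ν)t)/(sinh t cosh νt))`. -/
noncomputable def kappaFn (ν β : ℝ) : ℂ :=
  Complex.exp (-Complex.I * ((∫ t in Set.Ioi (0 : ℝ), kappaInt ν β t) : ℝ))

/-- The integrand in the definition of `ρ̂(β)`. -/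
noncomputable def rhoInt (ν lam β t : ℝ) : ℂ :=
  (1 / (t : ℂ)) * (Complex.sin (((β : ℂ) - Complex.I * lam / 2) * ν * t / Real.pi)) ^ 2 *
      Complex.sinh (((1 - ν) * t : ℝ) : ℂ) /
    (Complex.cosh ((ν * t : ℝ) : ℂ) * Complex.sinh ((t : ℝ) : ℂ) *
      Complex.sinh ((lam * ν * t / Real.pi : ℝ) : ℂ))

/-- `ρ̂(β) = exp(∫₀^∞ dt/t · sin²((β-iλ/2)νt/π) sinh((1-ν)t)/(cosh νt sinh t sinh(λνt/π)))`. -/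
noncomputable def rhoHat (ν lam β : ℝ) : ℂ :=
  Complex.exp (∫ t in Set.Ioi (0 : ℝ), rhoInt ν lam β t)

/-!
The factors of the `ρ̂`-integrand other than `sin²` are real, and `w = (β - iλ/2)ν/π` becomes
`-conj w` under `β ↦ -β`; hence `ρ̂(-β)` is the complex conjugate of `ρ̂(β)` and the quotient is
`exp (2i Im ∫)`. Since `Im sin² z = sin (2 Re z) sinh (2 Im z) / 2`, the imaginary part cancels the
factor `sinh (λνt/π)` and equals `-1/2` times the integrand of `κ`.

For convergence, `sinh ((1-ν)t) / (sinh t cosh νt)` decays exponentially, and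
`2 |Im z| ‖sin z‖² ≤ ‖z‖² sinh (2 |Im z|)` shows that the remaining factor is bounded.
-/

open scoped ComplexConjugate

lemma sinh_le_mul_cosh {x : ℝ} (hx : 0 ≤ x) : Real.sinh x ≤ x * Real.cosh x := by
  have deriv_le : ∀ y ∈ interior (Set.Icc 0 x), deriv Real.sinh y ≤ Real.cosh x := by
    intro y hy
    rw [interior_Icc] at hy
    rw [Real.deriv_sinh, Real.cosh_le_cosh, abs_of_pos hy.1, abs_of_nonneg hx]
    exact hy.2.le
  have mean_value := (convex_Icc 0 x).image_sub_le_mul_sub_of_deriv_le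
    Real.continuous_sinh.continuousOn Real.differentiable_sinh.differentiableOn deriv_le
    0 ⟨le_rfl, hx⟩ x ⟨hx, le_rfl⟩ hx
  simpa only [Real.sinh_zero, sub_zero, mul_comm x] using mean_value

lemma sinh_sub_le_exp_neg_mul_sinh (x : ℝ) {y : ℝ} (hy : 0 ≤ y) :
    Real.sinh (x - y) ≤ Real.exp (-y) * Real.sinh x := by
  have exp_add_le : Real.exp (-y + -x) ≤ Real.exp (-(x - y)) := Real.exp_le_exp.2 (by linarith)
  have exp_sub : Real.exp (x - y) = Real.exp (-y) * Real.exp x := by rw [← Real.exp_add]; ring_nf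
  rw [Real.exp_add] at exp_add_le
  rw [Real.sinh_eq, Real.sinh_eq, exp_sub]
  linarith

/-- The factor `sinh ((1-ν)t) / (sinh t cosh νt)` shared by the integrands of `κ` and `ρ̂`. -/
noncomputable def hyperbolicKernel (ν t : ℝ) : ℝ :=
  Real.sinh ((1 - ν) * t) / (Real.sinh t * Real.cosh (ν * t))

lemma abs_sinh_one_sub_mul_le {ν t : ℝ} (hν : 0 ≤ ν) (ht : 0 ≤ t) :
    |Real.sinh ((1 - ν) * t)| ≤
      max 1 ν * Real.exp (-min 1 ν * t) * (Real.sinh t * Real.cosh (ν * t)) := by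
  have sinh_nonneg : 0 ≤ Real.sinh t := Real.sinh_nonneg_iff.2 ht
  have νt_nonneg : 0 ≤ ν * t := mul_nonneg hν ht
  rw [Real.abs_sinh, abs_mul, abs_of_nonneg ht]
  rcases le_total ν 1 with hν1 | hν1
  · rw [abs_of_nonneg (sub_nonneg.2 hν1), max_eq_left hν1, min_eq_right hν1, one_mul]
    calc Real.sinh ((1 - ν) * t)
        = Real.sinh (t - ν * t) := by ring_nf
      _ ≤ Real.exp (-(ν * t)) * Real.sinh t := sinh_sub_le_exp_neg_mul_sinh t νt_nonneg
      _ ≤ Real.exp (-(ν * t)) * (Real.sinh t * Real.cosh (ν * t)) := by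
        gcongr
        exact le_mul_of_one_le_right sinh_nonneg (Real.one_le_cosh _)
      _ = Real.exp (-ν * t) * (Real.sinh t * Real.cosh (ν * t)) := by rw [neg_mul]
  · rw [abs_of_nonpos (sub_nonpos.2 hν1), max_eq_right hν1, min_eq_left hν1]
    calc Real.sinh (-(1 - ν) * t)
        = Real.sinh (ν * t - t) := by ring_nf
      _ ≤ Real.exp (-t) * Real.sinh (ν * t) := sinh_sub_le_exp_neg_mul_sinh _ ht
      _ ≤ Real.exp (-t) * (ν * t * Real.cosh (ν * t)) := by
        gcongr
        exact sinh_le_mul_cosh νt_nonneg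
      _ ≤ Real.exp (-t) * (ν * Real.sinh t * Real.cosh (ν * t)) := by
        gcongr
        exact Real.self_le_sinh_iff.2 ht
      _ = ν * Real.exp (-1 * t) * (Real.sinh t * Real.cosh (ν * t)) := by ring_nf

lemma integrableOn_hyperbolicKernel {ν : ℝ} (hν : 0 < ν) :
    IntegrableOn (hyperbolicKernel ν) (Set.Ioi 0) := by
  have exp_integrable :
      IntegrableOn (fun t ↦ max 1 ν * Real.exp (-min 1 ν * t)) (Set.Ioi 0) :=
    (integrableOn_exp_mul_Ioi (neg_neg_of_pos (lt_min one_pos hν)) 0).const_mul _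
  have kernel_measurable : Measurable (hyperbolicKernel ν) := by
    unfold hyperbolicKernel
    fun_prop
  refine Integrable.mono' exp_integrable kernel_measurable.aestronglyMeasurable ?_
  filter_upwards [ae_restrict_mem measurableSet_Ioi] with t (ht : 0 < t)
  have denom_pos : 0 < Real.sinh t * Real.cosh (ν * t) :=
    mul_pos (Real.sinh_pos_iff.2 ht) (Real.cosh_pos _)
  rw [hyperbolicKernel, Real.norm_eq_abs, abs_div, abs_of_pos denom_pos, div_le_iff₀ denom_pos]
  exact abs_sinh_one_sub_mul_le hν.le ht.le

lemma complex_sin_eq_mk (z : ℂ) :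
    Complex.sin z =
      ⟨Real.sin z.re * Real.cosh z.im, Real.cos z.re * Real.sinh z.im⟩ := by
  rw [Complex.sin_eq, Complex.mk_eq_add_mul_I]
  push_cast
  rfl

lemma norm_complex_sin_sq (z : ℂ) :
    ‖Complex.sin z‖ ^ 2 = Real.sin z.re ^ 2 + Real.sinh z.im ^ 2 := by
  rw [complex_sin_eq_mk, Complex.sq_norm, Complex.normSq_mk]
  linear_combination Real.sin z.re ^ 2 * Real.cosh_sq z.im
    + Real.sinh z.im ^ 2 * Real.sin_sq_add_cos_sq z.re

lemma complex_sin_sq_im (z : ℂ) :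
    (Complex.sin z ^ 2).im = Real.sin (2 * z.re) * Real.sinh (2 * z.im) / 2 := by
  rw [complex_sin_eq_mk, sq, Complex.mul_im, Real.sin_two_mul, Real.sinh_two_mul]
  ring

lemma two_mul_abs_im_mul_norm_sin_sq_le (z : ℂ) :
    2 * |z.im| * ‖Complex.sin z‖ ^ 2 ≤ ‖z‖ ^ 2 * Real.sinh (2 * |z.im|) := by
  set y := |z.im| with hy
  have y_nonneg : 0 ≤ y := abs_nonneg _
  have sin_sq_le : Real.sin z.re ^ 2 ≤ z.re ^ 2 := sq_le_sq.2 Real.abs_sin_le_abs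
  have le_sinh : 2 * y ≤ Real.sinh (2 * y) := Real.self_le_sinh_iff.2 (by positivity)
  have : 0 ≤ Real.sinh y := Real.sinh_nonneg_iff.2 y_nonneg
  have sinh_sq : Real.sinh z.im ^ 2 = Real.sinh y ^ 2 := by rw [hy, ← Real.abs_sinh, sq_abs]
  have norm_sq : ‖z‖ ^ 2 = z.re ^ 2 + y ^ 2 := by
    rw [Complex.sq_norm, Complex.normSq_apply, hy, sq_abs]
    ring
  calc 2 * y * ‖Complex.sin z‖ ^ 2
      = Real.sin z.re ^ 2 * (2 * y) + 2 * y * Real.sinh y * Real.sinh y := by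
        rw [norm_complex_sin_sq, sinh_sq]
        ring
    _ ≤ z.re ^ 2 * Real.sinh (2 * y) + 2 * y * Real.sinh y * (y * Real.cosh y) := by
        gcongr
        exact sinh_le_mul_cosh y_nonneg
    _ = ‖z‖ ^ 2 * Real.sinh (2 * y) := by
        rw [norm_sq, Real.sinh_two_mul]
        ring

/-- The quotient `sin² (tw) / (t sinh (2 Im (tw)))`. At `w = (β - iλ/2)ν/π` it is, up to sign, the
factor of the integrand of `ρ̂` complementary to `hyperbolicKernel`. -/
noncomputable def sinSqQuotient (w : ℂ) (t : ℝ) : ℂ :=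
  Complex.sin (t * w) ^ 2 / ((t * Real.sinh (2 * (t * w.im)) : ℝ) : ℂ)

lemma measurable_sinSqQuotient (w : ℂ) : Measurable (sinSqQuotient w) := by
  unfold sinSqQuotient
  fun_prop

lemma sinSqQuotient_neg_conj (w : ℂ) (t : ℝ) :
    sinSqQuotient (-conj w) t = conj (sinSqQuotient w t) := by
  rw [sinSqQuotient, sinSqQuotient, map_div₀, map_pow, ← Complex.sin_conj, map_mul,
    Complex.conj_ofReal, Complex.conj_ofReal, Complex.neg_im, Complex.conj_im, neg_neg, mul_neg,
    Complex.sin_neg, neg_sq]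

lemma sinSqQuotient_im {w : ℂ} {t : ℝ} (hw : w.im ≠ 0) (ht : t ≠ 0) :
    (sinSqQuotient w t).im = Real.sin (2 * (t * w.re)) / (2 * t) := by
  have : Real.sinh (2 * (t * w.im)) ≠ 0 :=
    Real.sinh_ne_zero.2 (mul_ne_zero two_ne_zero (mul_ne_zero ht hw))
  rw [sinSqQuotient, Complex.div_ofReal_im, complex_sin_sq_im, Complex.re_ofReal_mul,
    Complex.im_ofReal_mul]
  field_simp

lemma norm_sinSqQuotient_le {w : ℂ} {t : ℝ} (hw : w.im ≠ 0) (ht : 0 < t) :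
    ‖sinSqQuotient w t‖ ≤ ‖w‖ ^ 2 / (2 * |w.im|) := by
  have : 0 < |w.im| := abs_pos.2 hw
  have : 0 < Real.sinh (2 * (t * |w.im|)) := Real.sinh_pos_iff.2 (by positivity)
  have abs_denom :
      |t * Real.sinh (2 * (t * w.im))| = t * Real.sinh (2 * (t * |w.im|)) := by
    rw [abs_mul, Real.abs_sinh, abs_mul, abs_mul, abs_of_pos ht, abs_two]
  have sin_bound := two_mul_abs_im_mul_norm_sin_sq_le (t * w)
  rw [Complex.im_ofReal_mul, abs_mul, abs_of_pos ht, norm_mul, Complex.norm_of_nonneg ht.le]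
    at sin_bound
  rw [sinSqQuotient, norm_div, norm_pow, Complex.norm_real, Real.norm_eq_abs, abs_denom,
    div_le_div_iff₀ (by positivity) (by positivity)]
  refine le_of_mul_le_mul_left ?_ ht
  linarith

/-- The rescaled rapidity `w = (β - iλ/2)ν/π`, for which `tw` is the argument of `sin²` in the
integrand of `ρ̂`. -/
noncomputable def rescaledRapidity (ν lam β : ℝ) : ℂ :=
  ⟨β * ν / Real.pi, -(lam * ν / (2 * Real.pi))⟩

lemma rescaledRapidity_neg (ν lam β : ℝ) :
    rescaledRapidity ν lam (-β) = -conj (rescaledRapidity ν lam β) := by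
  apply Complex.ext <;> simp [rescaledRapidity, neg_div]

lemma rescaledRapidity_im_ne_zero {ν lam : ℝ} (hν : ν ≠ 0) (hlam : lam ≠ 0) (β : ℝ) :
    (rescaledRapidity ν lam β).im ≠ 0 :=
  neg_ne_zero.2 (div_ne_zero (mul_ne_zero hlam hν) Real.two_pi_pos.ne')

lemma rhoInt_eq_sinSqQuotient_mul (ν lam β t : ℝ) :
    rhoInt ν lam β t =
      -sinSqQuotient (rescaledRapidity ν lam β) t * (hyperbolicKernel ν t : ℂ) := by
  have sin_arg :
      ((β : ℂ) - Complex.I * lam / 2) * ν * t / Real.pi = t * rescaledRapidity ν lam β := by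
    rw [rescaledRapidity, Complex.mk_eq_add_mul_I]
    push_cast
    ring
  have sinh_arg :
      lam * ν * t / Real.pi = -(2 * (t * (rescaledRapidity ν lam β).im)) := by
    simp only [rescaledRapidity]
    ring
  rw [rhoInt, sinSqQuotient, hyperbolicKernel, sin_arg, sinh_arg, Complex.ofReal_neg,
    Complex.sinh_neg]
  push_cast
  ring

lemma kappaInt_eq_sin_mul_hyperbolicKernel (ν lam β t : ℝ) :
    kappaInt ν β t =
      Real.sin (2 * (t * (rescaledRapidity ν lam β).re)) / t * hyperbolicKernel ν t := by
  have sin_arg :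
      2 * β * ν * t / Real.pi = 2 * (t * (rescaledRapidity ν lam β).re) := by
    simp only [rescaledRapidity]
    ring
  rw [kappaInt, hyperbolicKernel, sin_arg]
  ring

lemma rhoInt_neg (ν lam β t : ℝ) : rhoInt ν lam (-β) t = conj (rhoInt ν lam β t) := by
  rw [rhoInt_eq_sinSqQuotient_mul, rhoInt_eq_sinSqQuotient_mul, rescaledRapidity_neg,
    sinSqQuotient_neg_conj, map_mul, map_neg, Complex.conj_ofReal]

lemma two_mul_rhoInt_im {ν lam t : ℝ} (hν : ν ≠ 0) (hlam : lam ≠ 0) (ht : t ≠ 0) (β : ℝ) :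
    2 * (rhoInt ν lam β t).im = -kappaInt ν β t := by
  rw [rhoInt_eq_sinSqQuotient_mul, kappaInt_eq_sin_mul_hyperbolicKernel ν lam,
    Complex.im_mul_ofReal, Complex.neg_im,
    sinSqQuotient_im (rescaledRapidity_im_ne_zero hν hlam β) ht]
  field_simp

lemma integrableOn_rhoInt {ν lam : ℝ} (hν : 0 < ν) (hlam : lam ≠ 0) (β : ℝ) :
    IntegrableOn (rhoInt ν lam β) (Set.Ioi 0) := by
  rw [funext (rhoInt_eq_sinSqQuotient_mul ν lam β)]
  refine (integrableOn_hyperbolicKernel hν).ofReal.bdd_mul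
    (c := ‖rescaledRapidity ν lam β‖ ^ 2 / (2 * |(rescaledRapidity ν lam β).im|))
    (measurable_sinSqQuotient _).neg.aestronglyMeasurable ?_
  filter_upwards [ae_restrict_mem measurableSet_Ioi] with t ht
  rw [norm_neg]
  exact norm_sinSqQuotient_le (rescaledRapidity_im_ne_zero hν.ne' hlam β) ht

lemma integrableOn_kappaInt {ν : ℝ} (hν : 0 < ν) (β : ℝ) :
    IntegrableOn (kappaInt ν β) (Set.Ioi 0) := by
  have im_integrable : IntegrableOn (fun t ↦ -2 * (rhoInt ν 1 β t).im) (Set.Ioi 0) :=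
    (integrableOn_rhoInt hν one_ne_zero β).im.const_mul (-2)
  refine im_integrable.congr_fun (fun t ht ↦ ?_) measurableSet_Ioi
  linarith [two_mul_rhoInt_im hν.ne' one_ne_zero (ne_of_gt ht) β]

lemma rhoHat_neg (ν lam β : ℝ) : rhoHat ν lam (-β) = conj (rhoHat ν lam β) := by
  simp only [rhoHat, rhoInt_neg, integral_conj, Complex.exp_conj]

lemma two_mul_integral_rhoInt_im {ν lam : ℝ} (hν : 0 < ν) (hlam : lam ≠ 0) (β : ℝ) :
    2 * (∫ t in Set.Ioi (0 : ℝ), rhoInt ν lam β t).im =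
      -∫ t in Set.Ioi (0 : ℝ), kappaInt ν β t :=
  calc 2 * (∫ t in Set.Ioi (0 : ℝ), rhoInt ν lam β t).im
      = ∫ t in Set.Ioi (0 : ℝ), 2 * (rhoInt ν lam β t).im := by
        rw [integral_const_mul]
        exact congrArg (2 * ·) (integral_im (integrableOn_rhoInt hν hlam β)).symm
    _ = ∫ t in Set.Ioi (0 : ℝ), -kappaInt ν β t :=
        setIntegral_congr_fun measurableSet_Ioi fun t ht ↦
          two_mul_rhoInt_im hν.ne' hlam (ne_of_gt ht) β
    _ = -∫ t in Set.Ioi (0 : ℝ), kappaInt ν β t := integral_neg _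

theorem rhoHat_div_rhoHat_neg_general {ν lam : ℝ} (hν : 0 < ν) (hlam : lam ≠ 0) :
    (∀ β : ℝ, IntegrableOn (kappaInt ν β) (Set.Ioi 0) ∧
      IntegrableOn (rhoInt ν lam β) (Set.Ioi 0)) ∧
    ∀ β : ℝ, rhoHat ν lam β / rhoHat ν lam (-β) = kappaFn ν β := by
  refine ⟨fun β ↦ ⟨integrableOn_kappaInt hν β, integrableOn_rhoInt hν hlam β⟩, fun β ↦ ?_⟩
  rw [rhoHat_neg, rhoHat, ← Complex.exp_conj, ← Complex.exp_sub, Complex.sub_conj,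
    two_mul_integral_rhoInt_im hν hlam, kappaFn]
  congr 1
  push_cast
  ring

/-- Both defining integrals converge absolutely, and `ρ̂(β)/ρ̂(-β) = κ(β)`. -/
theorem rhoHat_div_rhoHat_neg (ν lam : ℝ) (hν0 : 0 < ν) (hν1 : ν < 1) (hlam : 0 < lam) :
    (∀ β : ℝ, IntegrableOn (kappaInt ν β) (Set.Ioi 0) ∧
      IntegrableOn (rhoInt ν lam β) (Set.Ioi 0)) ∧
    ∀ β : ℝ, rhoHat ν lam β / rhoHat ν lam (-β) = kappaFn ν β :=
  rhoHat_div_rhoHat_neg_general hν0 hlam.ne'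
end

section
/- Let n ≥ 1 and β₁, …, β_{2n} ∈ ℂ. Define F₊(α) = ∏_{j=1}^{2n} sinh(½(α−β_j+πi/2)) and F₋(α) = (−1)ⁿ·∏_{j=1}^{2n} sinh(½(α−β_j−πi/2)). Then there exist complex numbers c₁, c₂, …, c_n (depending only on the β_j) such that for all α ∈ ℂ: F₊(α) − F₋(α) = Σ_{l=1}^{n} c_l·e^{(2l−n−1)α}, and moreover c₁ = (−i)^{n+1}·2^{1−2n}·e^{Σ_{j=1}^{2n} β_j/2}·Σ_{j=1}^{2n} e^{−β_j}. In particular, F₊ − F₋ is a linear combination of the exponentials e^{(2l−n−1)α} with 1 ≤ l ≤ n, and its coefficient at e^{−(n−1)α} is (−i)^{n+1}2^{1−2n}e^{Σβ_j/2}Σ_j e^{−β_j}. -/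
open Finset

/-!
With `z = e^w`, a factor `sinh ((w - β) / 2)` is `e^{β/2} (1 - e^{-β} z)` up to a constant multiple
of `z^{-1/2}`. Hence a product of `2n` such factors is `e^{∑ β/2} (4z)^{-n} P(-z)`, where
`P(y) = ∏ⱼ (1 + e^{-βⱼ} y)` has the elementary symmetric functions of the `e^{-βⱼ}` as coefficients.
Taking `w = α + πi/2` gives `F₊`. Since `e^{w - πi} = -z`, the sign `(-1)ⁿ` in `F₋` makes the
prefactors of `P(-z)` and `P(z)` agree, so only the odd powers of `z` survive in the difference.
-/

lemma sum_neg_pow_sub_sum_pow {R : Type*} [CommRing R] (a : ℕ → R) (y : R) (n : ℕ) :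
    ∑ k ∈ range (2 * n + 1), a k * (-y) ^ k - ∑ k ∈ range (2 * n + 1), a k * y ^ k
      = -2 * ∑ l ∈ Icc 1 n, a (2 * l - 1) * y ^ (2 * l - 1) := by
  induction n with
  | zero => simp
  | succ n ih =>
    have neg_pow_odd : (-y) ^ (2 * n + 1) = -y ^ (2 * n + 1) := Odd.neg_pow ⟨n, rfl⟩ y
    have neg_pow_even : (-y) ^ (2 * n + 2) = y ^ (2 * n + 2) := Even.neg_pow ⟨n + 1, by ring⟩ y
    rw [sum_Icc_succ_top (by omega), mul_add (-2), ← ih,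
      show 2 * (n + 1) + 1 = 2 * n + 3 by ring, show 2 * (n + 1) - 1 = 2 * n + 1 by omega]
    simp only [sum_range_succ _ (2 * n + 2), sum_range_succ _ (2 * n + 1), neg_pow_odd,
      neg_pow_even]
    ring

lemma prod_one_add_mul_eq_sum_esymm {ι R : Type*} [CommSemiring R] (s : Finset ι) (x : ι → R)
    (y : R) :
    ∏ i ∈ s, (1 + x i * y) = ∑ k ∈ range (#s + 1), (s.val.map x).esymm k * y ^ k := by
  rw [prod_one_add, sum_powerset]
  refine sum_congr rfl fun k _ => ?_
  rw [esymm_map_val, sum_mul]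
  refine sum_congr rfl fun t ht => ?_
  rw [prod_mul_distrib, prod_const, (mem_powersetCard.mp ht).2]

lemma esymm_map_val_one {ι R : Type*} [CommSemiring R] (s : Finset ι) (x : ι → R) :
    (s.val.map x).esymm 1 = ∑ i ∈ s, x i := by
  simp [esymm_map_val, powersetCard_one]

lemma prod_one_sub_mul_sub_prod_one_add_mul {ι R : Type*} [CommRing R] {s : Finset ι} {n : ℕ}
    (hs : #s = 2 * n) (x : ι → R) (y : R) :
    ∏ i ∈ s, (1 - x i * y) - ∏ i ∈ s, (1 + x i * y)
      = -2 * ∑ l ∈ Icc 1 n, (s.val.map x).esymm (2 * l - 1) * y ^ (2 * l - 1) := by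
  simp only [sub_eq_add_neg (1 : R), ← mul_neg]
  rw [prod_one_add_mul_eq_sum_esymm, prod_one_add_mul_eq_sum_esymm, hs, sum_neg_pow_sub_sum_pow]

lemma sinh_half_sub (w b : ℂ) :
    Complex.sinh ((w - b) / 2)
      = -(Complex.exp (-(w / 2)) / 2) * Complex.exp (b / 2)
          * (1 - Complex.exp (-b) * Complex.exp w) := by
  have exp_neg_half :
      Complex.exp (-((w - b) / 2)) = Complex.exp (-(w / 2)) * Complex.exp (b / 2) := by
    rw [← Complex.exp_add]; ring_nf
  have exp_half : Complex.exp ((w - b) / 2)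
      = Complex.exp (-(w / 2)) * Complex.exp (b / 2) * (Complex.exp (-b) * Complex.exp w) := by
    simp only [← Complex.exp_add]; ring_nf
  rw [Complex.sinh, exp_half, exp_neg_half]
  ring

lemma prod_sinh_half_sub {ι : Type*} {s : Finset ι} {n : ℕ} (hs : #s = 2 * n) (β : ι → ℂ)
    (w : ℂ) :
    ∏ i ∈ s, Complex.sinh ((w - β i) / 2)
      = Complex.exp (∑ i ∈ s, β i / 2) * ((4 * Complex.exp w)⁻¹) ^ n
          * ∏ i ∈ s, (1 - Complex.exp (-β i) * Complex.exp w) := by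
  have sq_prefactor : (-(Complex.exp (-(w / 2)) / 2)) ^ 2 = (4 * Complex.exp w)⁻¹ := by
    rw [mul_inv, ← Complex.exp_neg, neg_sq, div_pow, ← Complex.exp_nat_mul]
    ring_nf
  simp only [sinh_half_sub]
  rw [prod_mul_distrib, prod_mul_distrib, prod_const, hs, pow_mul, sq_prefactor, Complex.exp_sum]
  ring

lemma prod_sinh_half_sub_sub_prod_sinh_half_sub_pi {ι : Type*} {s : Finset ι} {n : ℕ}
    (hs : #s = 2 * n) (β : ι → ℂ) (w : ℂ) :
    ∏ i ∈ s, Complex.sinh ((w - β i) / 2)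
        - (-1) ^ n * ∏ i ∈ s, Complex.sinh ((w - Real.pi * Complex.I - β i) / 2)
      = ∑ l ∈ Icc 1 n, -2 * (4⁻¹) ^ n * Complex.exp (∑ i ∈ s, β i / 2)
          * (s.val.map fun i => Complex.exp (-β i)).esymm (2 * l - 1)
          * Complex.exp ((2 * l - n - 1) * w) := by
  have exp_eq_inv_pow_mul_pow : ∀ l ∈ Icc 1 n, Complex.exp ((2 * l - n - 1) * w)
      = (Complex.exp w)⁻¹ ^ n * Complex.exp w ^ (2 * l - 1) := by
    intro l hl
    have one_le : 1 ≤ 2 * l := by have := (mem_Icc.mp hl).1; omega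
    rw [← Complex.exp_neg, ← Complex.exp_nat_mul, ← Complex.exp_nat_mul, ← Complex.exp_add]
    push_cast [one_le]
    ring_nf
  have prefactors_agree :
      (-1) ^ n * ((4 * -Complex.exp w)⁻¹) ^ n = ((4 * Complex.exp w)⁻¹) ^ n := by
    rw [← mul_pow, mul_neg, inv_neg, neg_one_mul, neg_neg]
  calc
    _ = Complex.exp (∑ i ∈ s, β i / 2) * ((4 * Complex.exp w)⁻¹) ^ n
          * (∏ i ∈ s, (1 - Complex.exp (-β i) * Complex.exp w)
            - ∏ i ∈ s, (1 + Complex.exp (-β i) * Complex.exp w)) := by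
      simp only [prod_sinh_half_sub hs, Complex.exp_sub_pi_mul_I,
        mul_neg (Complex.exp (-β _)), sub_neg_eq_add]
      rw [← prefactors_agree]
      ring
    _ = _ := by
      rw [prod_one_sub_mul_sub_prod_one_add_mul hs, mul_left_comm, mul_sum, mul_sum]
      refine sum_congr rfl fun l hl => ?_
      rw [exp_eq_inv_pow_mul_pow l hl, mul_inv, mul_pow]
      ring

lemma exp_one_sub_mul_pi_div_two_mul_I (n : ℕ) :
    Complex.exp ((1 - n) * (Real.pi / 2 * Complex.I)) = -(-Complex.I) ^ (n + 1) := by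
  have exp_neg_pi_div_two : Complex.exp (-(Real.pi / 2 * Complex.I)) = -Complex.I := by
    rw [Complex.exp_neg, Complex.exp_pi_div_two_mul_I, Complex.inv_I]
  rw [← exp_neg_pi_div_two, ← Complex.exp_nat_mul, ← Complex.exp_add_pi_mul_I]
  push_cast
  ring_nf

/-- `F₊ - F₋` is a linear combination of `e^{(2l-n-1)α}`, `1 ≤ l ≤ n`, whose coefficient
at `e^{-(n-1)α}` (i.e. `l = 1`) is `(-i)^{n+1}·2^{1-2n}·e^{Σβⱼ/2}·Σⱼe^{-βⱼ}`. -/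
theorem Fplus_sub_Fminus_expansion (n : ℕ) (hn : 1 ≤ n) (β : Fin (2 * n) → ℂ) :
    ∃ c : ℕ → ℂ,
      (∀ α : ℂ,
        (∏ j, Complex.sinh ((α - β j + Real.pi * Complex.I / 2) / 2))
          - (-1 : ℂ) ^ n * ∏ j, Complex.sinh ((α - β j - Real.pi * Complex.I / 2) / 2)
        = ∑ l ∈ Finset.Icc 1 n, c l * Complex.exp ((2 * (l : ℂ) - (n : ℂ) - 1) * α)) ∧
      c 1 = (-Complex.I) ^ (n + 1) * (2 : ℂ) ^ (1 - 2 * (n : ℤ)) *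
        Complex.exp (∑ j, β j / 2) * ∑ j, Complex.exp (-β j) := by
  refine ⟨fun l => -2 * (4⁻¹) ^ n * Complex.exp (∑ j, β j / 2)
      * (univ.val.map fun j => Complex.exp (-β j)).esymm (2 * l - 1)
      * Complex.exp ((2 * l - n - 1) * (Real.pi / 2 * Complex.I)), fun α => ?_, ?_⟩
  · have shift_plus : ∀ j, α - β j + Real.pi * Complex.I / 2
        = α + Real.pi / 2 * Complex.I - β j := fun j => by ring
    have shift_minus : ∀ j, α - β j - Real.pi * Complex.I / 2
        = α + Real.pi / 2 * Complex.I - Real.pi * Complex.I - β j := fun j => by ring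
    simp only [shift_plus, shift_minus]
    rw [prod_sinh_half_sub_sub_prod_sinh_half_sub_pi (card_fin (2 * n))]
    refine sum_congr rfl fun l _ => ?_
    rw [mul_add, Complex.exp_add]
    ring
  · have two_zpow : (2 : ℂ) ^ (1 - 2 * (n : ℤ)) = 2 * (4⁻¹) ^ n := by
      rw [zpow_sub₀ two_ne_zero, zpow_one, zpow_mul, inv_pow, zpow_natCast, div_eq_mul_inv]
      norm_num
    have exponent_one : 2 * ((1 : ℕ) : ℂ) - n - 1 = 1 - n := by push_cast; ring
    simp only [exponent_one, exp_one_sub_mul_pi_div_two_mul_I, mul_one, Nat.reduceSub,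
      esymm_map_val_one, two_zpow]
    ring
end

section
/- Let r ≤ i ≤ s be integers, n = s−r+1, and let B_r, …, B_s be complex numbers that are pairwise distinct and satisfy B_j + B_l ≠ 0 for all r ≤ j, l ≤ s. Define F_{ji} = 1/(∏_{l=r, l≠j}^{i}(B_j−B_l) · ∏_{l=i}^{s}(B_j+B_l)) for r ≤ j ≤ i, and G_{ji} = (−1)ⁿ/(∏_{l=r}^{i}(B_j+B_l) · ∏_{l=i, l≠j}^{s}(B_j−B_l)) for i ≤ j ≤ s. Then for every integer k with 1 ≤ k ≤ n: Σ_{j=r}^{i} (−B_j)^{k−1}·F_{ji} + Σ_{j=i}^{s} B_j^{k−1}·G_{ji} = 0. -/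
open Finset

/-!
The poles of `P(A) / (∏ (A + b j) * ∏ (A - c l))` are the simple ones `-b j` and `c l`, and `F`, `G`
are, up to the common sign `(-1) ^ n`, the reciprocals of the derivative of the denominator there.
The sum of the residues is therefore the `A ^ n` coefficient of the Lagrange interpolant of `P`
at the `n + 1` poles; this interpolant is `P` itself, which has degree less than `n`.
-/

section

open Polynomial

variable {K ι κ : Type*} [Field K]

theorem sum_eval_div_prod_sub_eq_zero [DecidableEq ι] {S : Finset ι} {v : ι → K} {n : ℕ} {P : K[X]}
    (hv : Set.InjOn v S) (hS : #S = n + 1) (hP : P.degree < n) :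
    ∑ j ∈ S, P.eval (v j) / ∏ l ∈ S.erase j, (v j - v l) = 0 := by
  have hPS : P.degree < #S := hP.trans (by rw [hS]; exact_mod_cast n.lt_succ_self)
  rw [← Lagrange.coeff_eq_sum hv hPS, hS, Nat.add_sub_cancel]
  exact coeff_eq_zero_of_degree_lt hP

theorem disjSum_erase_inl [DecidableEq ι] [DecidableEq κ] (S : Finset ι) (T : Finset κ) (j : ι) :
    (S.disjSum T).erase (Sum.inl j) = (S.erase j).disjSum T := by
  ext (l | l) <;> simp

theorem disjSum_erase_inr [DecidableEq ι] [DecidableEq κ] (S : Finset ι) (T : Finset κ) (j : κ) :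
    (S.disjSum T).erase (Sum.inr j) = S.disjSum (T.erase j) := by
  ext (l | l) <;> simp

theorem injOn_sumElim_disjSum {α : Type*} {S : Finset ι} {T : Finset κ} {a : ι → α} {c : κ → α}
    (ha : Set.InjOn a S) (hc : Set.InjOn c T) (hac : ∀ j ∈ S, ∀ l ∈ T, a j ≠ c l) :
    Set.InjOn (Sum.elim a c) (S.disjSum T) := by
  rintro (j | j) hj (l | l) hl h <;>
    simp only [mem_coe, inl_mem_disjSum, inr_mem_disjSum, Sum.elim_inl, Sum.elim_inr] at hj hl h
  · rw [ha hj hl h]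
  · exact absurd h (hac j hj l hl)
  · exact absurd h.symm (hac l hl j hj)
  · rw [hc hj hl h]

theorem sum_eval_div_prod_sub_add_sum_eq_zero [DecidableEq ι] [DecidableEq κ] {S : Finset ι}
    {T : Finset κ} {a : ι → K} {c : κ → K} {n : ℕ} {P : K[X]} (ha : Set.InjOn a S)
    (hc : Set.InjOn c T) (hac : ∀ j ∈ S, ∀ l ∈ T, a j ≠ c l) (hcard : #S + #T = n + 1)
    (hP : P.degree < n) :
    ∑ j ∈ S, P.eval (a j) / ((∏ l ∈ S.erase j, (a j - a l)) * ∏ l ∈ T, (a j - c l))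
      + ∑ j ∈ T, P.eval (c j) / ((∏ l ∈ S, (c j - a l)) * ∏ l ∈ T.erase j, (c j - c l)) = 0 := by
  simpa only [sum_disjSum, disjSum_erase_inl, disjSum_erase_inr, prod_disjSum, Sum.elim_inl,
    Sum.elim_inr] using sum_eval_div_prod_sub_eq_zero (injOn_sumElim_disjSum ha hc hac)
      ((card_disjSum S T).trans hcard) hP

theorem prod_erase_neg_sub_neg_mul_prod_neg_sub {R : Type*} [CommRing R] [DecidableEq ι]
    {S : Finset ι} {T : Finset κ} (b : ι → R) (c : κ → R) {n : ℕ} (hcard : #S + #T = n + 1) {j : ι}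
    (hj : j ∈ S) :
    (∏ l ∈ S.erase j, (-b j - -b l)) * ∏ l ∈ T, (-b j - c l) =
      (-1) ^ n * ((∏ l ∈ S.erase j, (b j - b l)) * ∏ l ∈ T, (b j + c l)) := by
  have hS : ∏ l ∈ S.erase j, (-b j - -b l) =
      (-1) ^ #(S.erase j) * ∏ l ∈ S.erase j, (b j - b l) := by
    simp_rw [← prod_neg, neg_sub, neg_sub_neg]
  have hT : ∏ l ∈ T, (-b j - c l) = (-1) ^ #T * ∏ l ∈ T, (b j + c l) := by
    simp_rw [← prod_neg, neg_add']
  have hn : #(S.erase j) + #T = n := by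
    have := card_erase_add_one hj
    lia
  rw [hS, hT, ← hn, pow_add, mul_mul_mul_comm]

theorem residue_sum_zero_general [DecidableEq ι] [DecidableEq κ] {S : Finset ι} {T : Finset κ}
    {b : ι → K} {c : κ → K} {n : ℕ} {P : K[X]} (hb : Set.InjOn b S) (hc : Set.InjOn c T)
    (hbc : ∀ j ∈ S, ∀ l ∈ T, b j + c l ≠ 0) (hcard : #S + #T = n + 1) (hP : P.degree < n) :
    ∑ j ∈ S, P.eval (-b j) * (1 / ((∏ l ∈ S.erase j, (b j - b l)) * ∏ l ∈ T, (b j + c l)))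
      + ∑ j ∈ T, P.eval (c j) *
        ((-1) ^ n / ((∏ l ∈ S, (c j + b l)) * ∏ l ∈ T.erase j, (c j - c l))) = 0 := by
  have hpoles : ∀ j ∈ S, ∀ l ∈ T, -b j ≠ c l := fun j hj l hl h ↦
    hbc j hj l hl (by rw [← h, add_neg_cancel])
  have hresidues := sum_eval_div_prod_sub_add_sum_eq_zero (a := fun j ↦ -b j)
    (neg_injective.comp_injOn hb) hc hpoles hcard hP
  rw [← mul_zero ((-1) ^ n), ← hresidues, mul_add, mul_sum, mul_sum]
  congr 1
  · refine sum_congr rfl fun j hj ↦ ?_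
    rw [prod_erase_neg_sub_neg_mul_prod_neg_sub b c hcard hj, mul_one_div, ← mul_div_assoc,
      mul_div_mul_left _ _ (pow_ne_zero n (neg_ne_zero.mpr one_ne_zero))]
  · refine sum_congr rfl fun j _ ↦ ?_
    simp only [sub_neg_eq_add]
    rw [mul_div_left_comm]

end

theorem card_Icc_add_card_Icc {r i s : ℤ} (hri : r ≤ i) (his : i ≤ s) :
    #(Icc r i) + #(Icc i s) = (s - r + 1).toNat + 1 := by
  simp only [Int.card_Icc]
  lia

/-- Total-residue-zero (partial fraction) identity:
`Σ_{j=r}^{i} (-B_j)^{k-1} F_{ji} + Σ_{j=i}^{s} B_j^{k-1} G_{ji} = 0` for `1 ≤ k ≤ n = s-r+1`. -/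
theorem residue_sum_zero (r i s : ℤ) (hri : r ≤ i) (his : i ≤ s) (B : ℤ → ℂ)
    (hdist : Set.InjOn B (Set.Icc r s))
    (hsum : ∀ j ∈ Finset.Icc r s, ∀ l ∈ Finset.Icc r s, B j + B l ≠ 0)
    (k : ℕ) (hk : 1 ≤ k) (hk' : (k : ℤ) ≤ s - r + 1) :
    ∑ j ∈ Finset.Icc r i, (-B j) ^ (k - 1) *
        (1 / ((∏ l ∈ (Finset.Icc r i).erase j, (B j - B l)) *
          ∏ l ∈ Finset.Icc i s, (B j + B l)))
      + ∑ j ∈ Finset.Icc i s, B j ^ (k - 1) *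
        ((-1 : ℂ) ^ (s - r + 1) / ((∏ l ∈ Finset.Icc r i, (B j + B l)) *
          ∏ l ∈ (Finset.Icc i s).erase j, (B j - B l)))
      = 0 := by
  rw [← Int.toNat_of_nonneg (show 0 ≤ s - r + 1 by lia), zpow_natCast]
  simpa only [Polynomial.eval_pow, Polynomial.eval_X] using
    residue_sum_zero_general (P := Polynomial.X ^ (k - 1))
      (hdist.mono (by simpa using Set.Icc_subset_Icc_right his))
      (hdist.mono (by simpa using Set.Icc_subset_Icc_left hri))
      (fun j hj l hl ↦ hsum j (Icc_subset_Icc_right his hj) l (Icc_subset_Icc_left hri hl))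
      (card_Icc_add_card_Icc hri his)
      (by rw [Polynomial.degree_X_pow]; exact_mod_cast (by lia : k - 1 < (s - r + 1).toNat))
end

section
/- Let r ≤ i ≤ s be integers, n = s−r+1, k an integer with 1 ≤ k ≤ n, and let B_r, …, B_s be pairwise distinct positive real numbers. Then lim_{ε→0⁺} ∫₀^∞ A^{k−1}/(∏_{j=r}^{i}(A+B_j) · ∏_{j=i}^{s}(A−B_j+iε)) dA = (−1)^{n+1}·( Σ_{j=r}^{i} (−B_j)^{k−1}·(log B_j)·F_{ji} + Σ_{j=i}^{s} B_j^{k−1}·(log B_j + πi)·G_{ji} ), where F_{ji} = 1/(∏_{l=r, l≠j}^{i}(B_j−B_l)·∏_{l=i}^{s}(B_j+B_l)) and G_{ji} = (−1)ⁿ/(∏_{l=r}^{i}(B_j+B_l)·∏_{l=i, l≠j}^{s}(B_j−B_l)). -/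
open Finset MeasureTheory Filter

/-!
Let `p j` be the poles and `ρ j` the residues of the integrand. The residues add up to zero because
the integrand decays at least like `A⁻²`, so the partial fraction expansion can be rewritten as
`∑ j, ρ j * ((A - p j)⁻¹ - (A + 1)⁻¹)`, whose terms are separately integrable, with integral
`-log (-p j)`. Hence the integral equals `-∑ j, ρ j * log (-p j)`. As `ε → 0⁺`, the residues
converge, and the number `-(c - i ε)` attached to a pole `c > 0` approaches the branch cut of the
logarithm from above, whence `log c + π i`.
-/

open Complex (slitPlane)
open Lagrange (nodalWeight)
open scoped Polynomial Topology

section PartialFractions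

variable {ι F : Type*} [Field F] [DecidableEq ι] {s : Finset ι} {v : ι → F} {P : F[X]}

lemma eval_div_prod_sub_eq_sum_nodalWeight (hv : Set.InjOn v s) (hP : P.degree < #s) {x : F}
    (hx : ∀ j ∈ s, x ≠ v j) :
    P.eval x / ∏ j ∈ s, (x - v j) = ∑ j ∈ s, P.eval (v j) * nodalWeight s v j * (x - v j)⁻¹ := by
  have hprod : ∏ j ∈ s, (x - v j) ≠ 0 := prod_ne_zero_iff.2 fun j hj ↦ sub_ne_zero.2 (hx j hj)
  rw [div_eq_iff hprod]
  conv_lhs => rw [Lagrange.eq_interpolate hv hP, Lagrange.eval_interpolate_not_at_node _ hx,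
    Lagrange.eval_nodal, mul_comm]
  congr! 2 with j
  ring

lemma sum_eval_mul_nodalWeight_eq_zero (hv : Set.InjOn v s) (hP : P.natDegree + 1 < #s) :
    ∑ j ∈ s, P.eval (v j) * nodalWeight s v j = 0 := by
  have hdeg : P.degree < #s := P.degree_le_natDegree.trans_lt (by exact_mod_cast by omega)
  have hcoeff : P.coeff (#s - 1) = 0 := P.coeff_eq_zero_of_natDegree_lt (by omega)
  simpa only [nodalWeight, prod_inv_distrib, ← div_eq_mul_inv, hcoeff] using
    (Lagrange.coeff_eq_sum hv hdeg).symm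

end PartialFractions

lemma eventually_injOn_of_tendsto {ι α X : Type*} [TopologicalSpace X] [T2Space X] {s : Finset ι}
    {l : Filter α} {f : α → ι → X} {g : ι → X} (hg : Set.InjOn g s)
    (hf : ∀ j ∈ s, Tendsto (f · j) l (𝓝 (g j))) : ∀ᶠ a in l, Set.InjOn (f a) s := by
  have hne : ∀ᶠ a in l, ∀ i ∈ s, ∀ j ∈ s, i ≠ j → f a i ≠ f a j := by
    simp only [eventually_all_finset, eventually_imp_distrib_left]
    intro i hi j hj hij
    exact ((hf i hi).prodMk_nhds (hf j hj)).eventually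
      (isClosed_diagonal.isOpen_compl.mem_nhds (hg.ne hi hj hij))
  exact hne.mono fun a ha i hi j hj ↦ not_imp_not.1 (ha i hi j hj)

lemma injOn_sumElim_disjSum_s8 {ι κ α : Type*} {s : Finset ι} {t : Finset κ} {v : ι → α} {w : κ → α}
    (hv : Set.InjOn v s) (hw : Set.InjOn w t) (hvw : ∀ i ∈ s, ∀ j ∈ t, v i ≠ w j) :
    Set.InjOn (Sum.elim v w) (s.disjSum t) := by
  rintro (i | i) hi (j | j) hj h <;>
    simp only [mem_coe, inl_mem_disjSum, inr_mem_disjSum] at hi hj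
  · exact congrArg Sum.inl (hv hi hj h)
  · exact absurd h (hvw i hi j hj)
  · exact absurd h.symm (hvw j hj i hi)
  · exact congrArg Sum.inr (hw hi hj h)

section NodalWeight

variable {ι κ F : Type*} [Field F] [DecidableEq ι] [DecidableEq κ]
  {s : Finset ι} {t : Finset κ} (v : ι → F) (w : κ → F)

lemma nodalWeight_neg {n : ℕ} (hs : #s = n + 1) {j : ι} (hj : j ∈ s) :
    nodalWeight s (-v) j = (-1) ^ n * nodalWeight s v j := by
  have hcard : #(s.erase j) = n := by rw [card_erase_of_mem hj, hs, Nat.add_sub_cancel]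
  rw [nodalWeight, nodalWeight, ← hcard, ← prod_neg]
  refine prod_congr rfl fun l _ ↦ ?_
  rw [← inv_neg, Pi.neg_apply, Pi.neg_apply, neg_sub_neg, neg_sub]

lemma nodalWeight_disjSum_inl (j : ι) :
    nodalWeight (s.disjSum t) (Sum.elim v w) (Sum.inl j) =
      1 / ((∏ l ∈ s.erase j, (v j - v l)) * ∏ l ∈ t, (v j - w l)) := by
  have herase : (s.disjSum t).erase (Sum.inl j) = (s.erase j).disjSum t := by
    ext (l | l) <;> simp
  simp [nodalWeight, herase, prod_disjSum, mul_comm]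

lemma nodalWeight_disjSum_inr (j : κ) :
    nodalWeight (s.disjSum t) (Sum.elim v w) (Sum.inr j) =
      1 / ((∏ l ∈ s, (w j - v l)) * ∏ l ∈ t.erase j, (w j - w l)) := by
  have herase : (s.disjSum t).erase (Sum.inr j) = s.disjSum (t.erase j) := by
    ext (l | l) <;> simp
  simp [nodalWeight, herase, prod_disjSum, mul_comm]

lemma nodalWeight_disjSum_neg_inl {n : ℕ} (hn : #s + #t = n + 1) {j : ι} (hj : j ∈ s) :
    nodalWeight (s.disjSum t) (Sum.elim (fun l ↦ -v l) w) (Sum.inl j) =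
      (-1) ^ n * (1 / ((∏ l ∈ s.erase j, (v j - v l)) * ∏ l ∈ t, (v j + w l))) := by
  have hneg : Sum.elim (fun l ↦ -v l) w = -Sum.elim v (-w) := by
    rw [← Sum.elim_neg_neg, neg_neg, Pi.neg_def]
  rw [hneg, nodalWeight_neg _ ((card_disjSum s t).trans hn) (inl_mem_disjSum.2 hj),
    nodalWeight_disjSum_inl]
  simp only [Pi.neg_apply, sub_neg_eq_add]

lemma neg_sum_disjSum_mul_nodalWeight {n : ℕ} (hn : #s + #t = n + 1) (f : ι ⊕ κ → F) :
    -∑ x ∈ s.disjSum t, f x * nodalWeight (s.disjSum t) (Sum.elim (fun l ↦ -v l) w) x =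
      (-1) ^ (n + 1) *
        (∑ j ∈ s, f (Sum.inl j) *
            (1 / ((∏ l ∈ s.erase j, (v j - v l)) * ∏ l ∈ t, (v j + w l)))
          + ∑ j ∈ t, f (Sum.inr j) *
            ((-1) ^ n / ((∏ l ∈ s, (w j + v l)) * ∏ l ∈ t.erase j, (w j - w l)))) := by
  have hsign : (-1 : F) ^ n * (-1) ^ n = 1 := by rw [← mul_pow]; simp
  rw [sum_disjSum, neg_add, mul_add, mul_sum, mul_sum, ← sum_neg_distrib, ← sum_neg_distrib]
  congr 1 <;> refine sum_congr rfl fun j hj ↦ ?_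
  · rw [nodalWeight_disjSum_neg_inl v w hn hj]
    ring
  · simp only [nodalWeight_disjSum_inr, sub_neg_eq_add]
    linear_combination f (Sum.inr j) /
      ((∏ l ∈ s, (w j + v l)) * ∏ l ∈ t.erase j, (w j - w l)) * hsign

end NodalWeight

section HalfLine

open Asymptotics

lemma isEquivalent_ofReal_sub_atTop (p : ℂ) :
    (fun A : ℝ ↦ (A : ℂ) - p) ~[atTop] fun A ↦ (A : ℂ) :=
  IsEquivalent.refl.sub_isLittleO <| isLittleO_const_left.2 <| .inr <|
    tendsto_norm_cobounded_atTop.comp (RCLike.tendsto_ofReal_atTop_cobounded ℂ)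

lemma ofReal_sub_mem_slitPlane {p : ℂ} (hp : -p ∈ slitPlane) {A : ℝ} (hA : 0 ≤ A) :
    (A : ℂ) - p ∈ slitPlane := by
  rw [Complex.mem_slitPlane_iff] at hp ⊢
  refine hp.imp (fun hre ↦ ?_) fun him ↦ ?_
  · simpa using add_pos_of_nonneg_of_pos hA hre
  · simpa using him

lemma tendsto_log_ofReal_sub_sub_log_atTop (p : ℂ) :
    Tendsto (fun A : ℝ ↦ Complex.log (A - p) - Real.log A) atTop (𝓝 0) := by
  have hne : ∀ᶠ A : ℝ in atTop, (A : ℂ) ≠ 0 := by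
    filter_upwards [eventually_gt_atTop 0] with A hA using by exact_mod_cast hA.ne'
  have hratio : Tendsto (fun A : ℝ ↦ ((A : ℂ) - p) / A) atTop (𝓝 1) :=
    (isEquivalent_iff_tendsto_one hne).1 (isEquivalent_ofReal_sub_atTop p)
  have hlog := hratio.clog Complex.one_mem_slitPlane
  rw [Complex.log_one] at hlog
  refine hlog.congr' ?_
  filter_upwards [eventually_gt_atTop 0, hratio.eventually_ne one_ne_zero] with A hA hquot
  have hA' : (A : ℂ) ≠ 0 := by exact_mod_cast hA.ne'
  rw [eq_sub_iff_add_eq', ← Complex.log_ofReal_mul hA hquot, mul_div_cancel₀ _ hA']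

variable {p q : ℂ}

lemma continuousOn_inv_ofReal_sub (hp : -p ∈ slitPlane) :
    ContinuousOn (fun A : ℝ ↦ ((A : ℂ) - p)⁻¹) (Set.Ici 0) :=
  ContinuousOn.inv₀ (by fun_prop) fun _ hA ↦
    Complex.slitPlane_ne_zero (ofReal_sub_mem_slitPlane hp hA)

lemma inv_ofReal_sub_sub_inv_isBigO_atTop (p q : ℂ) :
    (fun A : ℝ ↦ ((A : ℂ) - p)⁻¹ - ((A : ℂ) - q)⁻¹) =O[atTop] fun A ↦ A ^ (-2 : ℝ) := by
  have hinv (z : ℂ) : (fun A : ℝ ↦ ((A : ℂ) - z)⁻¹) =O[atTop] fun A ↦ A⁻¹ :=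
    (isEquivalent_ofReal_sub_atTop z).inv.isBigO.trans <|
      .of_bound' <| .of_forall fun A ↦ by simp
  have hprod := ((hinv p).mul (hinv q)).const_mul_left (p - q)
  have hne (z : ℂ) : ∀ᶠ A : ℝ in atTop, (A : ℂ) - z ≠ 0 := by
    filter_upwards [eventually_gt_atTop z.re] with A hA h
    have := congrArg Complex.re h
    simp only [Complex.sub_re, Complex.ofReal_re, Complex.zero_re] at this
    linarith
  refine hprod.congr' ?_ ?_
  · filter_upwards [hne p, hne q] with A hp hq
    rw [inv_sub_inv hp hq]
    field_simp
    ring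
  · filter_upwards [eventually_ge_atTop 0] with A hA
    rw [Real.rpow_neg hA, Real.rpow_two, sq, mul_inv]

lemma integrableOn_Ioi_inv_ofReal_sub_sub_inv (hp : -p ∈ slitPlane) (hq : -q ∈ slitPlane) :
    IntegrableOn (fun A : ℝ ↦ ((A : ℂ) - p)⁻¹ - ((A : ℂ) - q)⁻¹) (Set.Ioi 0) := by
  have hcont := (continuousOn_inv_ofReal_sub hp).sub (continuousOn_inv_ofReal_sub hq)
  exact ((hcont.locallyIntegrableOn measurableSet_Ici).integrableOn_of_isBigO_atTop
    (inv_ofReal_sub_sub_inv_isBigO_atTop p q)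
    (integrableAtFilter_rpow_atTop_iff.2 (by norm_num))).mono_set Set.Ioi_subset_Ici_self

lemma integral_Ioi_inv_ofReal_sub_sub_inv (hp : -p ∈ slitPlane) (hq : -q ∈ slitPlane) :
    ∫ A in Set.Ioi (0 : ℝ), (((A : ℂ) - p)⁻¹ - ((A : ℂ) - q)⁻¹) =
      Complex.log (-q) - Complex.log (-p) := by
  have hderiv {z : ℂ} (hz : -z ∈ slitPlane) {A : ℝ} (hA : 0 ≤ A) :
      HasDerivAt (fun A : ℝ ↦ Complex.log (A - z)) ((A : ℂ) - z)⁻¹ A := by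
    simpa using ((Complex.ofRealCLM.hasDerivAt (x := A)).sub_const z).clog_real
      (ofReal_sub_mem_slitPlane hz hA)
  have hlim : Tendsto (fun A : ℝ ↦ Complex.log (A - p) - Complex.log (A - q)) atTop (𝓝 0) := by
    simpa using (tendsto_log_ofReal_sub_sub_log_atTop p).sub
      (tendsto_log_ofReal_sub_sub_log_atTop q)
  rw [integral_Ioi_of_hasDerivAt_of_tendsto' (fun A hA ↦ (hderiv hp hA).sub (hderiv hq hA))
    (integrableOn_Ioi_inv_ofReal_sub_sub_inv hp hq) hlim]
  simp

end HalfLine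

section Rational

variable {ι : Type*} [DecidableEq ι] {s : Finset ι} {P : ℂ[X]}

theorem integral_Ioi_eval_div_prod_sub {p : ι → ℂ} (hp : Set.InjOn p s)
    (hslit : ∀ j ∈ s, -p j ∈ slitPlane) (hP : P.natDegree + 1 < #s) :
    ∫ A in Set.Ioi (0 : ℝ), P.eval (A : ℂ) / ∏ j ∈ s, ((A : ℂ) - p j) =
      -∑ j ∈ s, P.eval (p j) * Complex.log (-p j) * nodalWeight s p j := by
  let ρ : ι → ℂ := fun j ↦ P.eval (p j) * nodalWeight s p j
  have hdeg : P.degree < #s := P.degree_le_natDegree.trans_lt (by exact_mod_cast by omega)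
  have hsum : ∑ j ∈ s, ρ j = 0 := sum_eval_mul_nodalWeight_eq_zero hp hP
  have hone : -(-1 : ℂ) ∈ slitPlane := by simp
  calc
    _ = ∫ A in Set.Ioi (0 : ℝ), ∑ j ∈ s, ρ j * (((A : ℂ) - p j)⁻¹ - ((A : ℂ) - (-1))⁻¹) := by
      refine setIntegral_congr_fun measurableSet_Ioi fun A hA ↦ ?_
      have hne : ∀ j ∈ s, (A : ℂ) ≠ p j := fun j hj ↦ sub_ne_zero.1 <|
        Complex.slitPlane_ne_zero (ofReal_sub_mem_slitPlane (hslit j hj) (le_of_lt hA))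
      simp only [mul_sub, sum_sub_distrib, ← sum_mul, hsum, zero_mul, sub_zero]
      exact eval_div_prod_sub_eq_sum_nodalWeight hp hdeg hne
    _ = ∑ j ∈ s, ρ j * ∫ A in Set.Ioi (0 : ℝ), (((A : ℂ) - p j)⁻¹ - ((A : ℂ) - (-1))⁻¹) := by
      rw [integral_finsetSum _ fun j hj ↦
        (integrableOn_Ioi_inv_ofReal_sub_sub_inv (hslit j hj) hone).const_mul _]
      simp only [integral_const_mul]
    _ = ∑ j ∈ s, ρ j * -Complex.log (-p j) := by
      refine sum_congr rfl fun j hj ↦ ?_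
      rw [integral_Ioi_inv_ofReal_sub_sub_inv (hslit j hj) hone]
      simp
    _ = _ := by
      simp only [ρ, mul_neg, sum_neg_distrib, neg_mul, mul_right_comm _ (nodalWeight s p _)]

variable {α : Type*} {l : Filter α} {p : α → ι → ℂ} {p₀ L : ι → ℂ}

theorem tendsto_integral_Ioi_eval_div_prod_sub (hp₀ : Set.InjOn p₀ s)
    (hp : ∀ j ∈ s, Tendsto (p · j) l (𝓝 (p₀ j)))
    (hslit : ∀ j ∈ s, ∀ᶠ a in l, -p a j ∈ slitPlane)
    (hlog : ∀ j ∈ s, Tendsto (fun a ↦ Complex.log (-p a j)) l (𝓝 (L j)))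
    (hP : P.natDegree + 1 < #s) :
    Tendsto (fun a ↦ ∫ A in Set.Ioi (0 : ℝ), P.eval (A : ℂ) / ∏ j ∈ s, ((A : ℂ) - p a j)) l
      (𝓝 (-∑ j ∈ s, P.eval (p₀ j) * L j * nodalWeight s p₀ j)) := by
  have hlim : Tendsto
      (fun a ↦ -∑ j ∈ s, P.eval (p a j) * Complex.log (-p a j) * nodalWeight s (p a) j) l
      (𝓝 (-∑ j ∈ s, P.eval (p₀ j) * L j * nodalWeight s p₀ j)) := by
    refine (tendsto_finsetSum _ fun j hj ↦ Tendsto.mul (Tendsto.mul ?_ (hlog j hj)) ?_).neg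
    · exact (P.continuous.tendsto _).comp (hp j hj)
    · refine tendsto_finsetProd _ fun i hi ↦ ?_
      obtain ⟨hij, hi⟩ := mem_erase.1 hi
      exact ((hp j hj).sub (hp i hi)).inv₀ (sub_ne_zero.2 (hp₀.ne hj hi hij.symm))
  refine hlim.congr' ?_
  filter_upwards [eventually_injOn_of_tendsto hp₀ hp, (eventually_all_finset s).2 hslit]
    with a hinj hslit
  exact (integral_Ioi_eval_div_prod_sub hinj hslit hP).symm

end Rational

lemma tendsto_log_neg_ofReal_sub_I_mul {c : ℝ} (hc : 0 < c) :
    Tendsto (fun ε : ℝ ↦ Complex.log (-((c : ℂ) - Complex.I * ε))) (𝓝[>] 0)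
      (𝓝 (Real.log c + Real.pi * Complex.I)) := by
  have hcut := Complex.tendsto_log_nhdsWithin_im_nonneg_of_re_neg_of_im_zero
    (z := -(c : ℂ)) (by simpa using hc) (by simp)
  rw [norm_neg, Complex.norm_of_nonneg hc.le] at hcut
  refine hcut.comp (tendsto_nhdsWithin_iff.2 ⟨?_, ?_⟩)
  · have hcont : Continuous fun ε : ℝ ↦ -((c : ℂ) - Complex.I * ε) := by fun_prop
    simpa using (hcont.tendsto 0).mono_left nhdsWithin_le_nhds
  · filter_upwards [self_mem_nhdsWithin] with ε hε
    simpa using le_of_lt hε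

theorem basic_integral_i0_general {ι κ : Type*} [DecidableEq ι] [DecidableEq κ]
    {S : Finset ι} {T : Finset κ} {b : ι → ℂ} {c : κ → ℝ}
    (hb : ∀ j ∈ S, b j ∈ slitPlane) (hbinj : Set.InjOn b S)
    (hc : ∀ j ∈ T, 0 < c j) (hcinj : Set.InjOn c T)
    {n : ℕ} (hn : #S + #T = n + 1) {P : ℂ[X]} (hP : P.natDegree < n) :
    Tendsto
      (fun ε : ℝ ↦ ∫ A in Set.Ioi (0 : ℝ),
        P.eval (A : ℂ) /
          ((∏ j ∈ S, ((A : ℂ) + b j)) * ∏ j ∈ T, ((A : ℂ) - c j + Complex.I * ε)))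
      (𝓝[>] 0)
      (𝓝 ((-1) ^ (n + 1) *
        ((∑ j ∈ S, P.eval (-b j) * Complex.log (b j) *
            (1 / ((∏ l ∈ S.erase j, (b j - b l)) * ∏ l ∈ T, (b j + c l))))
          + ∑ j ∈ T, P.eval (c j : ℂ) * (Real.log (c j) + Real.pi * Complex.I) *
            ((-1) ^ n / ((∏ l ∈ S, (c j + b l)) * ∏ l ∈ T.erase j, ((c j : ℂ) - c l)))))) := by
  let p (ε : ℝ) : ι ⊕ κ → ℂ := Sum.elim (fun j ↦ -b j) fun j ↦ c j - Complex.I * ε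
  let p₀ : ι ⊕ κ → ℂ := Sum.elim (fun j ↦ -b j) fun j ↦ c j
  let L : ι ⊕ κ → ℂ :=
    Sum.elim (fun j ↦ Complex.log (b j)) fun j ↦ Real.log (c j) + Real.pi * Complex.I
  have hcard : #(S.disjSum T) = n + 1 := by rw [card_disjSum, hn]
  have hdisj : ∀ i ∈ S, ∀ j ∈ T, -b i ≠ c j := by
    intro i hi j hj h
    have hneg : -(c j : ℂ) ∈ slitPlane := by simpa [← h] using hb i hi
    exact (hc j hj).not_gt (Complex.neg_ofReal_mem_slitPlane.1 hneg)
  have hp₀ : Set.InjOn p₀ (S.disjSum T) :=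
    injOn_sumElim_disjSum_s8 (neg_injective.comp_injOn hbinj)
      (Complex.ofReal_injective.comp_injOn hcinj) hdisj
  have hlim : ∀ j ∈ S.disjSum T, Tendsto (p · j) (𝓝[>] 0) (𝓝 (p₀ j)) := by
    rintro (j | j) -
    · exact tendsto_const_nhds
    · have hcont : Continuous fun ε : ℝ ↦ (c j : ℂ) - Complex.I * ε := by fun_prop
      simpa [p, p₀] using (hcont.tendsto 0).mono_left nhdsWithin_le_nhds
  have hslit : ∀ j ∈ S.disjSum T, ∀ᶠ ε in 𝓝[>] 0, -p ε j ∈ slitPlane := by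
    rintro (j | j) hj
    · exact .of_forall fun ε ↦ by simpa [p] using hb j (inl_mem_disjSum.1 hj)
    · filter_upwards [self_mem_nhdsWithin] with ε hε
      exact .inr (by simpa [p] using ne_of_gt hε)
  have hlog : ∀ j ∈ S.disjSum T, Tendsto (fun ε ↦ Complex.log (-p ε j)) (𝓝[>] 0) (𝓝 (L j)) := by
    rintro (j | j) hj
    · simp [p, L]
    · exact tendsto_log_neg_ofReal_sub_I_mul (hc j (inr_mem_disjSum.1 hj))
  have key := tendsto_integral_Ioi_eval_div_prod_sub (P := P) hp₀ hlim hslit hlog (by omega)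
  rw [neg_sum_disjSum_mul_nodalWeight b _ hn] at key
  simpa only [p, p₀, L, prod_disjSum, Sum.elim_inl, Sum.elim_inr, sub_neg_eq_add,
    sub_sub_eq_add_sub, add_sub_right_comm] using key

/-- Evaluation (with the `+i0` prescription) of the basic one-variable integral
appearing in the free-fermion (`ν = 1/2`) correlation functions. -/
theorem basic_integral_i0 (r i s : ℤ) (hri : r ≤ i) (his : i ≤ s) (B : ℤ → ℝ)
    (hpos : ∀ j ∈ Finset.Icc r s, 0 < B j)
    (hdist : Set.InjOn B (Set.Icc r s))
    (k : ℕ) (hk : 1 ≤ k) (hk' : (k : ℤ) ≤ s - r + 1) :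
    Tendsto
      (fun ε : ℝ => ∫ A in Set.Ioi (0 : ℝ),
        (A : ℂ) ^ (k - 1) /
          ((∏ j ∈ Finset.Icc r i, ((A : ℂ) + (B j : ℂ))) *
            ∏ j ∈ Finset.Icc i s, ((A : ℂ) - (B j : ℂ) + Complex.I * (ε : ℂ))))
      (nhdsWithin 0 (Set.Ioi 0))
      (nhds ((-1 : ℂ) ^ (s - r + 1 + 1) *
        ((∑ j ∈ Finset.Icc r i, (-(B j : ℂ)) ^ (k - 1) * ((Real.log (B j) : ℂ)) *
            (1 / ((∏ l ∈ (Finset.Icc r i).erase j, ((B j : ℂ) - (B l : ℂ))) *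
              ∏ l ∈ Finset.Icc i s, ((B j : ℂ) + (B l : ℂ)))))
          + ∑ j ∈ Finset.Icc i s, (B j : ℂ) ^ (k - 1) *
              ((Real.log (B j) : ℂ) + Real.pi * Complex.I) *
            ((-1 : ℂ) ^ (s - r + 1) /
              ((∏ l ∈ Finset.Icc r i, ((B j : ℂ) + (B l : ℂ))) *
                ∏ l ∈ (Finset.Icc i s).erase j, ((B j : ℂ) - (B l : ℂ))))))) := by
  obtain ⟨n, hn⟩ : ∃ n : ℕ, (n : ℤ) = s - r + 1 := ⟨(s - r + 1).toNat, by omega⟩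
  have hL : Icc r i ⊆ Icc r s := Icc_subset_Icc_right his
  have hR : Icc i s ⊆ Icc r s := Icc_subset_Icc_left hri
  have hBinj : Set.InjOn B (Icc r s) := by rwa [coe_Icc]
  have hlog : ∀ j ∈ Icc r i, Complex.log (B j) = Real.log (B j) := fun j hj ↦
    (Complex.ofReal_log (hpos j (hL hj)).le).symm
  have key := basic_integral_i0_general (n := n) (P := Polynomial.X ^ (k - 1))
    (fun j hj ↦ Complex.ofReal_mem_slitPlane.2 (hpos j (hL hj)))
    (Complex.ofReal_injective.comp_injOn (hBinj.mono (coe_subset.2 hL)))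
    (fun j hj ↦ hpos j (hR hj)) (hBinj.mono (coe_subset.2 hR))
    (by rw [Int.card_Icc, Int.card_Icc]; omega) (by rw [Polynomial.natDegree_X_pow]; omega)
  rw [← hn, ← Nat.cast_add_one, zpow_natCast, zpow_natCast]
  simpa +contextual [hlog] using key
end

section
/- Let r ≤ s be integers, n = s−r+1, and let B_r, …, B_s be pairwise distinct positive real numbers. For 1 ≤ k ≤ n and r ≤ i ≤ s set J_{k,i} = 2·i^{s−i}·√(B_i)·√(∏_{j=r}^{s} B_j)·Σ_{j=r}^{i} (−B_j)^{k−1}·F_{ji}, where F_{ji} = 1/(∏_{l=r, l≠j}^{i}(B_j−B_l)·∏_{l=i}^{s}(B_j+B_l)). Then ∏_{r ≤ j < k ≤ s} ( i·(B_j+B_k)/√(B_j B_k) ) · det( (J_{k,i})_{1≤k≤n, r≤i≤s} ) = 1. -/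
open Finset

/-!
The determinant factors as a transposed Vandermonde matrix in the points `-B_j` times the upper
triangular matrix `(F_{ji})_{j ≤ i}`. The Vandermonde differences `B_i - B_k` cancel against those
in the diagonal entries `F_{ii}`, which leaves `-1 / (B_i + B_k)` for each pair `i < k` and
`1 / (2 B_i)` for each `i`. The column prefactors contribute `I √(B_i B_k)` for each pair, with
`I ^ 2 = -1`, and `2 B_i` for each `i`, so every pair contributes `I * (-I) = 1` to the whole
expression.
-/

section FiniteOrder

variable {α : Type*} [Fintype α] [LinearOrder α]

theorem det_sum_Iic_mul {R : Type*} [CommRing R] [LocallyFiniteOrderBot α] (A u : Matrix α α R) :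
    (Matrix.of fun k i => ∑ j ∈ Iic i, A k j * u j i).det = A.det * ∏ i, u i i := by
  let U : Matrix α α R := .of fun j i => if j ≤ i then u j i else 0
  have hfactor : (Matrix.of fun k i => ∑ j ∈ Iic i, A k j * u j i) = A * U := by
    ext k i
    simp [U, Matrix.mul_apply, ← sum_filter, filter_ge_eq_Iic]
  have hU : U.IsUpperTriangular := fun j i hij => if_neg (not_le.mpr hij)
  rw [hfactor, Matrix.det_mul, Matrix.det_of_isUpperTriangular hU]
  simp [U]

theorem prod_pow_card_Ioi_mul_mul_prod {R : Type*} [CommSemiring R]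
    [LocallyFiniteOrderTop α] [LocallyFiniteOrderBot α] (c a : R) (x : α → R) :
    ∏ i, c * a ^ #(Ioi i) * x i * ∏ j, x j =
      (∏ i, c * x i ^ 2) * ∏ i, ∏ k ∈ Ioi i, a * (x i * x k) := by
  have hpairs : ∏ i, ∏ k ∈ Ioi i, x i * x k = ∏ i, ∏ k ∈ {i}ᶜ, x k := by
    simp_rw [← prod_prod_Ioi_mul_eq_prod_prod_off_diag fun j _ => x j, mul_comm]
  simp_rw [prod_mul_distrib (f := fun _ => a), prod_const]
  rw [prod_mul_distrib (f := fun i => a ^ #(Ioi i)), hpairs, ← prod_mul_distrib,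
    ← prod_mul_distrib]
  refine prod_congr rfl fun i _ => ?_
  rw [Fintype.prod_eq_mul_prod_compl i x]
  ring

end FiniteOrder

section FreeFermion

variable {K : Type*} [Field K] {α : Type*} [LinearOrder α] [LocallyFiniteOrderTop α]
  [LocallyFiniteOrderBot α] {n : ℕ}

/-- The coefficient `F_{ji}` of the determinant formula, with the sites `r, …, s` replaced by an
arbitrary linear order whose rays are finite. It is meant for injective `b` and `j ≤ i`. -/
def freeFermionCoeff (b : α → K) (j i : α) : K :=
  1 / ((∏ l ∈ (Iic i).erase j, (b j - b l)) * ∏ l ∈ Ici i, (b j + b l))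

theorem freeFermionCoeff_self (b : α → K) (i : α) :
    freeFermionCoeff b i i =
      (2 * b i)⁻¹ * ((∏ l ∈ Iio i, (b i - b l)⁻¹) * ∏ l ∈ Ioi i, (b i + b l)⁻¹) := by
  rw [freeFermionCoeff, Iic_erase, ← mul_prod_Ioi_eq_prod_Ici, one_div, mul_inv, mul_inv,
    prod_inv_distrib, prod_inv_distrib, two_mul, mul_left_comm]

theorem det_sum_neg_pow_mul_freeFermionCoeff {b : Fin n → K} (hb : Function.Injective b) :
    (Matrix.of fun k i : Fin n => ∑ j ∈ Iic i, (-b j) ^ (k : ℕ) * freeFermionCoeff b j i).det =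
      (∏ i, (2 * b i)⁻¹) * ∏ i, ∏ k ∈ Ioi i, -(b i + b k)⁻¹ := by
  have hswap : ∏ i, ∏ l ∈ Iio i, (b i - b l)⁻¹ = ∏ i, ∏ k ∈ Ioi i, (b k - b i)⁻¹ :=
    prod_comm' fun _ _ => by simp
  have hdet := det_sum_Iic_mul (Matrix.vandermonde fun j => -b j).transpose
    (.of fun j i => freeFermionCoeff b j i)
  simp only [Matrix.transpose_apply, Matrix.vandermonde_apply, Matrix.of_apply,
    Matrix.det_transpose, Matrix.det_vandermonde, freeFermionCoeff_self] at hdet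
  rw [hdet, prod_mul_distrib, prod_mul_distrib, hswap, mul_left_comm]
  simp_rw [← prod_mul_distrib]
  refine prod_congr rfl fun i _ => congrArg _ (prod_congr rfl fun k hk => ?_)
  have hne : b k - b i ≠ 0 := sub_ne_zero.mpr (hb.ne (mem_Ioi.mp hk).ne')
  field

theorem prod_pairs_mul_det_freeFermion_eq_one {I : K} (hI : I ^ 2 = -1) {b x : Fin n → K}
    (hx : ∀ i, x i ^ 2 = b i) (hadd : ∀ i k, b i + b k ≠ 0) (hb : Function.Injective b) :
    (∏ i, ∏ k ∈ Ioi i, I * (b i + b k) / (x i * x k)) *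
      (Matrix.of fun k i : Fin n => 2 * I ^ #(Ioi i) * x i * (∏ j, x j) *
        ∑ j ∈ Iic i, (-b j) ^ (k : ℕ) * freeFermionCoeff b j i).det = 1 := by
  have htwo (i) : 2 * b i ≠ 0 := two_mul (b i) ▸ hadd i i
  have hx0 (i) : x i ≠ 0 := fun h => htwo i (by simp [← hx, h])
  have hsites : (∏ i, 2 * x i ^ 2) * ∏ i, (2 * b i)⁻¹ = 1 := by
    simp_rw [← prod_mul_distrib, hx, mul_inv_cancel₀ (htwo _), prod_const_one]
  have hpairs : (∏ i, ∏ k ∈ Ioi i, I * (b i + b k) / (x i * x k)) *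
      ((∏ i, ∏ k ∈ Ioi i, I * (x i * x k)) * ∏ i, ∏ k ∈ Ioi i, -(b i + b k)⁻¹) = 1 := by
    simp_rw [← prod_mul_distrib]
    refine prod_eq_one fun i _ => prod_eq_one fun k _ => ?_
    have := hx0 i
    have := hx0 k
    have := hadd i k
    field_simp
    simp [hI]
  have hcols := Matrix.det_mul_row (fun i => 2 * I ^ #(Ioi i) * x i * ∏ j, x j)
    (.of fun k i : Fin n => ∑ j ∈ Iic i, (-b j) ^ (k : ℕ) * freeFermionCoeff b j i)
  simp only [Matrix.of_apply] at hcols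
  rw [hcols, prod_pow_card_Ioi_mul_mul_prod,
    det_sum_neg_pow_mul_freeFermionCoeff hb, mul_mul_mul_comm, hsites, one_mul, hpairs]

end FreeFermion

section Interval

variable {r s : ℤ}

/-- The order embedding `i ↦ r + i` numbering the integer interval `[r, s]` by `Fin (s - r + 1)`,
as in the column index of the determinant. -/
noncomputable def intervalEmbedding (r s : ℤ) : Fin (s - r + 1).toNat ↪o ℤ :=
  (Fin.valOrderEmb _).trans (Nat.castOrderEmbedding.trans (OrderEmbedding.addLeft r))

theorem intervalEmbedding_apply (i : Fin (s - r + 1).toNat) :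
    intervalEmbedding r s i = r + ((i : ℕ) : ℤ) := rfl

theorem map_intervalEmbedding_univ : univ.map (intervalEmbedding r s).toEmbedding = Icc r s := by
  ext a
  simp only [mem_map, mem_univ, true_and, RelEmbedding.coe_toEmbedding, intervalEmbedding_apply,
    Fin.exists_iff, mem_Icc]
  constructor
  · rintro ⟨i, hi, rfl⟩
    lia
  · exact fun h => ⟨(a - r).toNat, by lia, by lia⟩

theorem intervalEmbedding_mem_Icc (i : Fin (s - r + 1).toNat) :
    intervalEmbedding r s i ∈ Icc r s :=
  map_intervalEmbedding_univ (r := r) (s := s) ▸ mem_map_of_mem _ (mem_univ i)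

theorem map_intervalEmbedding_Iic (i : Fin (s - r + 1).toNat) :
    (Iic i).map (intervalEmbedding r s).toEmbedding = Icc r (intervalEmbedding r s i) := by
  have hi := mem_Icc.mp (intervalEmbedding_mem_Icc i)
  calc (Iic i).map (intervalEmbedding r s).toEmbedding
      = {a ∈ Icc r s | a ≤ intervalEmbedding r s i} := by
        simp [← map_intervalEmbedding_univ, filter_map, filter_ge_eq_Iic]
    _ = Icc r (intervalEmbedding r s i) := by
        ext a
        simp only [mem_filter, mem_Icc]
        lia

theorem map_intervalEmbedding_Ici (i : Fin (s - r + 1).toNat) :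
    (Ici i).map (intervalEmbedding r s).toEmbedding = Icc (intervalEmbedding r s i) s := by
  have hi := mem_Icc.mp (intervalEmbedding_mem_Icc i)
  calc (Ici i).map (intervalEmbedding r s).toEmbedding
      = {a ∈ Icc r s | intervalEmbedding r s i ≤ a} := by
        simp [← map_intervalEmbedding_univ, filter_map, filter_le_eq_Ici]
    _ = Icc (intervalEmbedding r s i) s := by
        ext a
        simp only [mem_filter, mem_Icc]
        lia

theorem sub_intervalEmbedding (i : Fin (s - r + 1).toNat) :
    s - intervalEmbedding r s i = (#(Ioi i) : ℤ) := by
  rw [Fin.card_Ioi, intervalEmbedding_apply]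
  have := i.isLt
  lia

end Interval

theorem freeFermionCoeff_comp_intervalEmbedding {K : Type*} [Field K] {r s : ℤ} (B : ℤ → K)
    (j i : Fin (s - r + 1).toNat) :
    freeFermionCoeff (B ∘ intervalEmbedding r s) j i =
      1 / ((∏ l ∈ (Icc r (intervalEmbedding r s i)).erase (intervalEmbedding r s j),
          (B (intervalEmbedding r s j) - B l)) *
        ∏ l ∈ Icc (intervalEmbedding r s i) s, (B (intervalEmbedding r s j) + B l)) := by
  rw [← map_intervalEmbedding_Iic, ← map_intervalEmbedding_Ici, ← RelEmbedding.coe_toEmbedding,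
    ← map_erase, prod_map, prod_map]
  rfl

theorem det_normalization_general {K : Type*} [Field K] {I : K} (hI : I ^ 2 = -1) (r s : ℤ)
    (B x : ℤ → K) (hx : ∀ j ∈ Icc r s, x j ^ 2 = B j)
    (hadd : ∀ j ∈ Icc r s, ∀ k ∈ Icc r s, B j + B k ≠ 0) (hdist : Set.InjOn B (Set.Icc r s)) :
    (∏ j ∈ Icc r s, ∏ k ∈ Icc r s with j < k, I * (B j + B k) / (x j * x k)) *
      Matrix.det (Matrix.of fun k i : Fin (s - r + 1).toNat =>
        2 * I ^ (s - (r + ((i : ℕ) : ℤ))) * x (r + ((i : ℕ) : ℤ)) * (∏ j ∈ Icc r s, x j) *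
          ∑ j ∈ Icc r (r + ((i : ℕ) : ℤ)), (-B j) ^ (k : ℕ) *
            (1 / ((∏ l ∈ (Icc r (r + ((i : ℕ) : ℤ))).erase j, (B j - B l)) *
              ∏ l ∈ Icc (r + ((i : ℕ) : ℤ)) s, (B j + B l)))) = 1 := by
  let e := intervalEmbedding r s
  have he (i) : e i ∈ Icc r s := intervalEmbedding_mem_Icc i
  have hinj : Function.Injective (B ∘ e) := fun i j h =>
    e.injective (hdist (mem_Icc.mp (he i)) (mem_Icc.mp (he j)) h)
  have key := prod_pairs_mul_det_freeFermion_eq_one hI (x := x ∘ e) (b := B ∘ e)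
    (fun i => hx _ (he i)) (fun i k => hadd _ (he i) _ (he k)) hinj
  simp_rw [← intervalEmbedding_apply]
  convert key using 2
  · simp [← map_intervalEmbedding_univ, filter_map, filter_lt_eq_Ioi, e]
  · congr! 2
    ext k i
    rw [sub_intervalEmbedding, zpow_natCast, ← map_intervalEmbedding_univ, prod_map]
    simp_rw [e, freeFermionCoeff_comp_intervalEmbedding]
    rw [← map_intervalEmbedding_Iic, sum_map]
    rfl

/-- The normalization identity `⟨1⟩ = 1` for the determinant formula of XXZ
correlation functions at the free-fermion point `ν = 1/2`:
`∏_{r≤j<k≤s} (i(B_j+B_k)/√(B_jB_k)) · det(J_{k,i}) = 1`. -/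
theorem det_normalization (r s : ℤ) (hrs : r ≤ s) (B : ℤ → ℝ)
    (hpos : ∀ j ∈ Finset.Icc r s, 0 < B j)
    (hdist : Set.InjOn B (Set.Icc r s)) :
    (∏ j ∈ Finset.Icc r s, ∏ k ∈ (Finset.Icc r s).filter (fun k => j < k),
        (Complex.I * ((B j : ℂ) + (B k : ℂ)) / (Real.sqrt (B j * B k) : ℂ)))
      * Matrix.det (Matrix.of fun (k i : Fin (s - r + 1).toNat) =>
          2 * Complex.I ^ (s - (r + ((i : ℕ) : ℤ))) *
            (Real.sqrt (B (r + ((i : ℕ) : ℤ))) : ℂ) *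
            (Real.sqrt (∏ j ∈ Finset.Icc r s, B j) : ℂ) *
            ∑ j ∈ Finset.Icc r (r + ((i : ℕ) : ℤ)),
              (-(B j : ℂ)) ^ (k : ℕ) *
                (1 / ((∏ l ∈ (Finset.Icc r (r + ((i : ℕ) : ℤ))).erase j,
                    ((B j : ℂ) - (B l : ℂ))) *
                  ∏ l ∈ Finset.Icc (r + ((i : ℕ) : ℤ)) s, ((B j : ℂ) + (B l : ℂ)))))
      = 1 := by
  have hroots : ∀ j ∈ Icc r s, (√(B j) : ℂ) ^ 2 = B j := fun j hj => by
    rw [← Complex.ofReal_pow, Real.sq_sqrt (hpos j hj).le]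
  have hadd : ∀ j ∈ Icc r s, ∀ k ∈ Icc r s, (B j : ℂ) + B k ≠ 0 := fun j hj k hk =>
    mod_cast (add_pos (hpos j hj) (hpos k hk)).ne'
  rw [Real.sqrt_prod _ fun j hj => (hpos j hj).le, Complex.ofReal_prod]
  refine (congrArg (· * _) (prod_congr rfl fun j hj => prod_congr rfl fun k _ => ?_)).trans
    (det_normalization_general Complex.I_sq r s (fun j => (B j : ℂ)) (fun j => √(B j)) hroots hadd
      (Complex.ofReal_injective.comp_injOn hdist))
  rw [Real.sqrt_mul (hpos j hj).le, Complex.ofReal_mul]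
end

section
/- Let M ≤ N be integers, z₁, z₂ nonzero complex numbers with z₁ ≠ z₂, and S_M, …, S_N arbitrary complex numbers. Then (z₂/z₁)^{N+1}·∏_{j=M}^{N}(1+S_j z₂^{−1})(1−S_j z₁)/(1−z₂ z₁^{−1}) + Σ_{k=M}^{N} (z₂/z₁)^{k}·(1+S_k²)·∏_{j=M}^{k−1}(1+S_j z₂^{−1})(1−S_j z₁)·∏_{j=k+1}^{N}(1−S_j z₂)(1+S_j z₁^{−1}) + (z₂/z₁)^{M−1}·∏_{j=M}^{N}(1−S_j z₂)(1+S_j z₁^{−1})/(1−z₂^{−1} z₁) = 0. -/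
open Finset

/-!
Put `w = z₂ / z₁`, `A j = (1 + S j / z₂) (1 - S j z₁)` and `B j = (1 - S j z₂) (1 + S j / z₁)`.
At each site `w A j - B j = (w - 1) (1 + S j ^ 2)`, so after multiplication by `w - 1` the sum over
`k` becomes, up to the factor `w ^ M`, the telescoping expansion of `∏ w A j - ∏ B j`, in which
`w A` replaces `B` one site at a time from the left.
-/

theorem prod_sub_prod_ordered {ι R : Type*} [LinearOrder ι] [CommRing R] (s : Finset ι)
    (f g : ι → R) :
    ∏ i ∈ s, f i - ∏ i ∈ s, g i =
      ∑ i ∈ s, (f i - g i) * (∏ j ∈ s with j < i, f j) * ∏ j ∈ s with i < j, g j := by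
  simpa only [add_sub_cancel, sub_eq_iff_eq_add'] using prod_add_ordered s g fun i => f i - g i

theorem prod_Icc_sub_prod_Icc {ι R : Type*} [LinearOrder ι] [LocallyFiniteOrder ι] [CommRing R]
    (f g : ι → R) (a b : ι) :
    ∏ i ∈ Icc a b, f i - ∏ i ∈ Icc a b, g i =
      ∑ i ∈ Icc a b, (f i - g i) * (∏ j ∈ Ico a i, f j) * ∏ j ∈ Ioc i b, g j := by
  rw [prod_sub_prod_ordered]
  refine sum_congr rfl fun i hi => ?_
  have filter_lt : {j ∈ Icc a b | j < i} = Ico a i := by grind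
  have filter_gt : {j ∈ Icc a b | i < j} = Ioc i b := by grind
  rw [filter_lt, filter_gt]

theorem zpow_mul_prod_Icc_const_mul {G : Type*} [CommGroupWithZero G] {w : G} (hw : w ≠ 0)
    (f : ℤ → G) {M N : ℤ} (hMN : M ≤ N + 1) :
    w ^ M * ∏ j ∈ Icc M N, (w * f j) = w ^ (N + 1) * ∏ j ∈ Icc M N, f j := by
  rw [prod_mul_distrib, prod_const, ← zpow_natCast, Int.card_Icc_of_le _ _ hMN, ← mul_assoc,
    ← zpow_add₀ hw, add_sub_cancel]

section Field

variable {K : Type*} [Field K]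

theorem sum_zpow_mul_prod_Icc_mul_prod_Icc {w : K} (hw : w ≠ 0) (f g : ℤ → K) {M N : ℤ}
    (hMN : M ≤ N + 1) :
    ∑ k ∈ Icc M N, w ^ k * (w * f k - g k) * (∏ j ∈ Icc M (k - 1), f j) *
        ∏ j ∈ Icc (k + 1) N, g j =
      w ^ (N + 1) * ∏ j ∈ Icc M N, f j - w ^ M * ∏ j ∈ Icc M N, g j := by
  rw [← zpow_mul_prod_Icc_const_mul hw f hMN, ← mul_sub, prod_Icc_sub_prod_Icc, mul_sum]
  refine sum_congr rfl fun k hk => ?_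
  have weight : w ^ M * ∏ j ∈ Icc M (k - 1), (w * f j) = w ^ k * ∏ j ∈ Icc M (k - 1), f j := by
    simpa only [sub_add_cancel] using
      zpow_mul_prod_Icc_const_mul hw f (N := k - 1) (by simpa using (mem_Icc.mp hk).1)
  rw [← Icc_sub_one_right_eq_Ico, ← Icc_add_one_left_eq_Ioc]
  linear_combination -(w * f k - g k) * (∏ j ∈ Icc (k + 1) N, g j) * weight

theorem div_mul_site_factor_sub_site_factor {z₁ z₂ : K} (h₁ : z₁ ≠ 0) (h₂ : z₂ ≠ 0) (s : K) :
    z₂ / z₁ * ((1 + s * z₂⁻¹) * (1 - s * z₁)) - (1 - s * z₂) * (1 + s * z₁⁻¹) =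
      (z₂ / z₁ - 1) * (1 + s ^ 2) := by
  field_simp
  ring

theorem zpow_sub_one_div_one_sub_inv {w : K} (hw : w ≠ 0) (n : ℤ) :
    w ^ (n - 1) / (1 - w⁻¹) = w ^ n / (w - 1) := by
  rw [zpow_sub_one₀ hw, ← mul_div_mul_right _ (1 - w⁻¹) hw, inv_mul_cancel_right₀ hw, sub_mul,
    one_mul, inv_mul_cancel₀ hw]

theorem div_one_sub_add_zpow_mul_div_one_sub_inv {w : K} (hw : w ≠ 0) (n : ℤ) (x y : K) :
    x / (1 - w) + w ^ (n - 1) * y / (1 - w⁻¹) = -((x - w ^ n * y) / (w - 1)) := by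
  rw [mul_div_right_comm (w ^ (n - 1)), zpow_sub_one_div_one_sub_inv hw, ← neg_sub w 1, div_neg]
  ring

theorem anticommutator_identity_general {M N : ℤ} (hMN : M ≤ N + 1) {z₁ z₂ : K}
    (h₁ : z₁ ≠ 0) (h₂ : z₂ ≠ 0) (hne : z₁ ≠ z₂) (S : ℤ → K) :
    (z₂ / z₁) ^ (N + 1) *
        (∏ j ∈ Icc M N, ((1 + S j * z₂⁻¹) * (1 - S j * z₁))) / (1 - z₂ * z₁⁻¹)
      + (∑ k ∈ Icc M N, (z₂ / z₁) ^ k * (1 + S k ^ 2) *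
          (∏ j ∈ Icc M (k - 1), ((1 + S j * z₂⁻¹) * (1 - S j * z₁))) *
          (∏ j ∈ Icc (k + 1) N, ((1 - S j * z₂) * (1 + S j * z₁⁻¹))))
      + (z₂ / z₁) ^ (M - 1) *
          (∏ j ∈ Icc M N, ((1 - S j * z₂) * (1 + S j * z₁⁻¹))) / (1 - z₂⁻¹ * z₁)
      = 0 := by
  have hw : z₂ / z₁ ≠ 0 := div_ne_zero h₂ h₁
  have hw_sub : z₂ / z₁ - 1 ≠ 0 := sub_ne_zero.mpr ((div_eq_one_iff_eq h₁).not.mpr hne.symm)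
  have ratio_eq : z₂ * z₁⁻¹ = z₂ / z₁ := (div_eq_mul_inv z₂ z₁).symm
  have inv_ratio_eq : z₂⁻¹ * z₁ = (z₂ / z₁)⁻¹ := by rw [inv_div, div_eq_inv_mul]
  rw [ratio_eq, inv_ratio_eq, add_right_comm, div_one_sub_add_zpow_mul_div_one_sub_inv hw,
    neg_add_eq_zero, div_eq_iff hw_sub, ← sum_zpow_mul_prod_Icc_mul_prod_Icc hw _ _ hMN, sum_mul]
  refine sum_congr rfl fun k _ => ?_
  rw [div_mul_site_factor_sub_site_factor h₁ h₂]
  ring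

end Field

/-- The rational-function identity at the core of the anticommutator computation
`[φ*(θ₁), φ(θ₂)]₊` for the inhomogeneous critical Ising (XY) transfer matrix. -/
theorem anticommutator_identity (M N : ℤ) (hMN : M ≤ N) (z₁ z₂ : ℂ)
    (h₁ : z₁ ≠ 0) (h₂ : z₂ ≠ 0) (hne : z₁ ≠ z₂) (S : ℤ → ℂ) :
    (z₂ / z₁) ^ (N + 1) *
        (∏ j ∈ Finset.Icc M N, ((1 + S j * z₂⁻¹) * (1 - S j * z₁))) / (1 - z₂ * z₁⁻¹)
      + (∑ k ∈ Finset.Icc M N, (z₂ / z₁) ^ k * (1 + S k ^ 2) *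
          (∏ j ∈ Finset.Icc M (k - 1), ((1 + S j * z₂⁻¹) * (1 - S j * z₁))) *
          (∏ j ∈ Finset.Icc (k + 1) N, ((1 - S j * z₂) * (1 + S j * z₁⁻¹))))
      + (z₂ / z₁) ^ (M - 1) *
          (∏ j ∈ Finset.Icc M N, ((1 - S j * z₂) * (1 + S j * z₁⁻¹))) / (1 - z₂⁻¹ * z₁)
      = 0 :=
  anticommutator_identity_general (by lia) h₁ h₂ hne S
end

section
/- Let M ≤ N be integers and γ : ℤ → ℂ with γ_j = 0 for j ∉ [M,N]. Set S_j = sinh γ_j, C_j = cosh γ_j, and let z be a nonzero complex number. For n ∈ ℤ define x_n = C_n·zⁿ·∏_{j=M}^{N} f_j(n), where f_j(n) = (1+S_j z^{−1}) if j ≤ n−1, f_j(n) = (1−S_j z) if j ≥ n+1, and f_j(n) = 1 if j = n. For m, n ∈ ℤ define A_{mn} = C_m·(∏_{j=n+1}^{m−1} S_j)·C_n if m > n, A_{mn} = 0 if m = n, and A_{mn} = (−1)^{n−m−1}·C_n·(∏_{j=m+1}^{n−1} S_j)·C_m if m < n. Then for every m ∈ ℤ the family (A_{mn}·x_n)_{n∈ℤ}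 has finite support and Σ_{n∈ℤ} A_{mn}·x_n = (z + z^{−1})·x_m. -/
open Finset

/-- The one-particle eigenvector `x_n = C_n zⁿ ∏_{j=M}^{N} f_j(n)`. -/
noncomputable def xvec (M N : ℤ) (γ : ℤ → ℂ) (z : ℂ) (n : ℤ) : ℂ :=
  Complex.cosh (γ n) * z ^ n *
    ∏ j ∈ Finset.Icc M N,
      (if j < n then 1 + Complex.sinh (γ j) * z⁻¹
       else if j = n then 1
       else 1 - Complex.sinh (γ j) * z)

/-- The one-particle Hamiltonian of the inhomogeneous critical Ising (XY) chain. -/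
noncomputable def Amat (γ : ℤ → ℂ) (m n : ℤ) : ℂ :=
  if n < m then
    Complex.cosh (γ m) * (∏ j ∈ Finset.Icc (n + 1) (m - 1), Complex.sinh (γ j)) *
      Complex.cosh (γ n)
  else if m = n then 0
  else (-1 : ℂ) ^ (n - m - 1) * Complex.cosh (γ n) *
    (∏ j ∈ Finset.Icc (m + 1) (n - 1), Complex.sinh (γ j)) * Complex.cosh (γ m)

/-!
Write `x n = C n * w n`, and let `v n` be the wave attached to the bond between `n - 1` and `n`,
whose product skips no site. Pulling out the factor at `n` gives
`v n = (1 - S n * z) * w n` and `v (n + 1) = (z + S n) * w n`. Since `C n ^ 2 = 1 + S n ^ 2`, both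
`z⁻¹ * v n` (going up) and `v (n + 1)` (going down) solve first-order linear recurrences with
coefficients `S n`, `-S n` and source `C n ^ 2 * w n`. The sums of `A m n * x n` over `n < m` and
over `n > m` are the variation-of-constants solutions of these recurrences, multiplied by `C m`, so
they equal `C m * (z⁻¹ - S m) * w m` and `C m * (z + S m) * w m`.
-/

section Finset

lemma sum_Icc_eq_sum_Ico_add_add_sum_Ioc {ι M : Type*} [LinearOrder ι] [LocallyFiniteOrder ι]
    [AddCommMonoid M] {a b c : ι} (hab : a ≤ b) (hbc : b ≤ c) (f : ι → M) :
    ∑ i ∈ Icc a c, f i = ∑ i ∈ Ico a b, f i + f b + ∑ i ∈ Ioc b c, f i := by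
  have hdisj : Disjoint (Ico a b) (Icc b c) := by
    rw [disjoint_left]
    intro i hi hi'
    exact (mem_Ico.1 hi).2.not_ge (mem_Icc.1 hi').1
  have hunion : Ico a b ∪ Icc b c = Icc a c := by
    rw [← coe_inj]
    simpa using Set.Ico_union_Icc_eq_Icc hab hbc
  rw [← hunion, sum_union hdisj, ← add_sum_Ioc_eq_sum_Icc hbc, add_assoc]

lemma prod_eq_mul_prod_of_forall_ne {ι M : Type*} [CommMonoid M] {s : Finset ι}
    {f g : ι → M} {a : ι} (hfg : ∀ i ∈ s, i ≠ a → f i = g i) (hg : g a = 1)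
    (hf : a ∉ s → f a = 1) : ∏ i ∈ s, f i = f a * ∏ i ∈ s, g i := by
  classical
  by_cases ha : a ∈ s
  · rw [← mul_prod_erase s f ha, ← mul_prod_erase s g ha, hg, one_mul]
    exact congrArg _ <| prod_congr rfl fun i hi ↦ hfg i (mem_of_mem_erase hi) (ne_of_mem_erase hi)
  · rw [hf ha, one_mul]
    exact prod_congr rfl fun i hi ↦ hfg i hi (ne_of_mem_of_not_mem hi ha)

end Finset

section LinearRecurrence

variable {R : Type*} [CommSemiring R] {a g u : ℤ → R} {k m : ℤ}

lemma eq_prod_Ico_mul_add_sum_of_add_one_eq_mul_add (hu : ∀ n, u (n + 1) = a n * u n + g n)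
    (hkm : k ≤ m) :
    u m = (∏ j ∈ Ico k m, a j) * u k + ∑ n ∈ Ico k m, (∏ j ∈ Ioo n m, a j) * g n := by
  induction m, hkm using Int.leInduction with
  | base => simp
  | succ m hkm ih =>
    have hsum : ∑ n ∈ Ico k m, (∏ j ∈ Ioo n (m + 1), a j) * g n =
        a m * ∑ n ∈ Ico k m, (∏ j ∈ Ioo n m, a j) * g n := by
      rw [mul_sum]
      refine sum_congr rfl fun n hn ↦ ?_
      rw [Ioo_add_one_right_eq_Ioc, ← mul_prod_Ioo_eq_prod_Ioc (mem_Ico.1 hn).2, mul_assoc]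
    rw [hu, ih, ← prod_Ico_mul_eq_prod_Ico_add_one hkm, ← sum_Ico_add_eq_sum_Ico_add_one hkm, hsum,
      Ioo_add_one_right_eq_Ioc, Ioc_self, prod_empty]
    ring

lemma eq_prod_Ioc_mul_add_sum_of_sub_one_eq_mul_add (hu : ∀ n, u (n - 1) = a n * u n + g n)
    (hmk : m ≤ k) :
    u m = (∏ j ∈ Ioc m k, a j) * u k + ∑ n ∈ Ioc m k, (∏ j ∈ Ioo m n, a j) * g n := by
  induction m, hmk using Int.leInductionDown with
  | base => simp
  | pred m hmk ih =>
    have hsum : ∑ n ∈ Ioc m k, (∏ j ∈ Ioo (m - 1) n, a j) * g n =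
        a m * ∑ n ∈ Ioc m k, (∏ j ∈ Ioo m n, a j) * g n := by
      rw [mul_sum]
      refine sum_congr rfl fun n hn ↦ ?_
      rw [Ioo_sub_one_left_eq_Ioc, ← mul_prod_Ioo_eq_prod_Ico (mem_Ioc.1 hn).1, mul_assoc]
    rw [hu, ih, ← insert_Ioc_left_eq_Ioc_sub_one hmk, prod_insert left_notMem_Ioc,
      sum_insert left_notMem_Ioc, hsum, Ioo_sub_one_left_eq_Ioc, Ico_self, prod_empty]
    ring

end LinearRecurrence

section Hamiltonian

variable {R : Type*} [CommRing R]

/-- The one-particle Hamiltonian of the inhomogeneous critical Ising chain over a commutative ring,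
with `S` and `C` in place of `sinh ∘ γ` and `cosh ∘ γ`. The sign `(-1) ^ (n - m - 1)` of the entries
above the diagonal is distributed over the `n - m - 1` factors of their product. -/
noncomputable def isingHamiltonian (S C : ℤ → R) (m n : ℤ) : R :=
  if n < m then C m * (∏ j ∈ Ioo n m, S j) * C n
  else if m = n then 0
  else C n * (∏ j ∈ Ioo m n, -S j) * C m

/-- The wave of momentum `z` at the sites of the chain, i.e. the eigenvector of the Hamiltonian
without its amplitude `C n`. The finite set `s` of sites is meant to contain the support of `S`. -/
def siteWave (s : Finset ℤ) (S : ℤ → R) (z : Rˣ) (n : ℤ) : R :=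
  ↑(z ^ n) * ∏ j ∈ s, (if j < n then 1 + S j * ↑z⁻¹ else if j = n then 1 else 1 - S j * z)

/-- The companion of `siteWave` on the bonds of the chain; index `n` stands for the bond between
the sites `n - 1` and `n`. -/
def bondWave (s : Finset ℤ) (S : ℤ → R) (z : Rˣ) (n : ℤ) : R :=
  ↑(z ^ n) * ∏ j ∈ s, (if j < n then 1 + S j * ↑z⁻¹ else 1 - S j * z)

variable {s : Finset ℤ} {S C : ℤ → R} {z : Rˣ} {k m n : ℤ}

lemma isingHamiltonian_of_lt (h : n < m) :
    isingHamiltonian S C m n = C m * (∏ j ∈ Ioo n m, S j) * C n :=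
  if_pos h

lemma isingHamiltonian_of_gt (h : m < n) :
    isingHamiltonian S C m n = C n * (∏ j ∈ Ioo m n, -S j) * C m := by
  rw [isingHamiltonian, if_neg h.not_gt, if_neg h.ne]

lemma isingHamiltonian_self : isingHamiltonian S C m m = 0 := by
  simp [isingHamiltonian]

lemma isingHamiltonian_eq_zero_of_lt_of_lt (hk : S k = 0) (hnk : n < k) (hkm : k < m) :
    isingHamiltonian S C m n = 0 := by
  rw [isingHamiltonian_of_lt (hnk.trans hkm), prod_eq_zero (mem_Ioo.2 ⟨hnk, hkm⟩) hk, mul_zero,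
    zero_mul]

lemma isingHamiltonian_eq_zero_of_gt_of_gt (hk : S k = 0) (hkn : k < n) (hmk : m < k) :
    isingHamiltonian S C m n = 0 := by
  rw [isingHamiltonian_of_gt (hmk.trans hkn),
    prod_eq_zero (mem_Ioo.2 ⟨hmk, hkn⟩) (by rw [hk, neg_zero]), mul_zero, zero_mul]

lemma bondWave_eq_mul_siteWave (hS : ∀ j ∉ s, S j = 0) (n : ℤ) :
    bondWave s S z n = (1 - S n * z) * siteWave s S z n := by
  rw [bondWave, siteWave, prod_eq_mul_prod_of_forall_ne (a := n)
    (g := fun j ↦ if j < n then 1 + S j * ↑z⁻¹ else if j = n then 1 else 1 - S j * z)]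
  · rw [if_neg (lt_irrefl n), mul_left_comm]
  · intro j _ hj
    simp only [if_neg hj]
  · simp
  · intro hn
    simp [hS n hn]

lemma bondWave_add_one_eq_mul_siteWave (hS : ∀ j ∉ s, S j = 0) (n : ℤ) :
    bondWave s S z (n + 1) = (z + S n) * siteWave s S z n := by
  rw [bondWave, siteWave, prod_eq_mul_prod_of_forall_ne (a := n)
    (g := fun j ↦ if j < n then 1 + S j * ↑z⁻¹ else if j = n then 1 else 1 - S j * z)]
  · have hz : (z : R) * (1 + S n * ↑z⁻¹) = z + S n := by linear_combination S n * z.mul_inv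
    rw [if_pos (lt_add_one n), zpow_add_one, Units.val_mul, ← hz]
    ring
  · intro j _ hj
    simp only [if_neg hj, Int.lt_add_one_iff, hj.le_iff_lt]
  · simp
  · intro hn
    simp [hS n hn]

lemma sum_isingHamiltonian_Ico (hSC : ∀ n, C n ^ 2 = 1 + S n ^ 2) (hS : ∀ j ∉ s, S j = 0)
    (hk : S k = 0) (hkm : k < m) :
    ∑ n ∈ Ico k m, isingHamiltonian S C m n * (C n * siteWave s S z n) =
      C m * (↑z⁻¹ * bondWave s S z m) := by
  have hrec (n : ℤ) : ↑z⁻¹ * bondWave s S z (n + 1) =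
      S n * (↑z⁻¹ * bondWave s S z n) + C n ^ 2 * siteWave s S z n := by
    rw [bondWave_add_one_eq_mul_siteWave hS, bondWave_eq_mul_siteWave hS, hSC]
    linear_combination (1 + S n ^ 2) * siteWave s S z n * z.inv_mul
  rw [eq_prod_Ico_mul_add_sum_of_add_one_eq_mul_add (u := fun n ↦ ↑z⁻¹ * bondWave s S z n)
      hrec hkm.le,
    prod_eq_zero (left_mem_Ico.2 hkm) hk, zero_mul, zero_add, mul_sum]
  refine sum_congr rfl fun n hn ↦ ?_
  rw [isingHamiltonian_of_lt (mem_Ico.1 hn).2]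
  ring

lemma sum_isingHamiltonian_Ioc (hSC : ∀ n, C n ^ 2 = 1 + S n ^ 2) (hS : ∀ j ∉ s, S j = 0)
    (hk : S k = 0) (hmk : m < k) :
    ∑ n ∈ Ioc m k, isingHamiltonian S C m n * (C n * siteWave s S z n) =
      C m * bondWave s S z (m + 1) := by
  have hrec (n : ℤ) : bondWave s S z (n - 1 + 1) =
      -S n * bondWave s S z (n + 1) + C n ^ 2 * siteWave s S z n := by
    rw [sub_add_cancel, bondWave_add_one_eq_mul_siteWave hS, bondWave_eq_mul_siteWave hS, hSC]
    ring
  rw [eq_prod_Ioc_mul_add_sum_of_sub_one_eq_mul_add (u := fun n ↦ bondWave s S z (n + 1))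
      hrec hmk.le,
    prod_eq_zero (right_mem_Ioc.2 hmk) (by rw [hk, neg_zero]), zero_mul, zero_add, mul_sum]
  refine sum_congr rfl fun n hn ↦ ?_
  rw [isingHamiltonian_of_gt (mem_Ioc.1 hn).1]
  ring

theorem Amat_eigenvector_general (hSC : ∀ n, C n ^ 2 = 1 + S n ^ 2) (hS : ∀ j ∉ s, S j = 0)
    (z : Rˣ) (m : ℤ) :
    (Function.support fun n ↦ isingHamiltonian S C m n * (C n * siteWave s S z n)).Finite ∧
      ∑ᶠ n, isingHamiltonian S C m n * (C n * siteWave s S z n) =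
        (↑z + ↑z⁻¹) * (C m * siteWave s S z m) := by
  obtain ⟨k, hkm : k < m, hk⟩ := (Set.Iio_infinite m).exists_notMem_finset s
  obtain ⟨l, hml : m < l, hl⟩ := (Set.Ioi_infinite m).exists_notMem_finset s
  have hsupp : (Function.support fun n ↦ isingHamiltonian S C m n * (C n * siteWave s S z n)) ⊆
      ↑(Icc k l) := by
    intro n hn
    have hA : isingHamiltonian S C m n ≠ 0 := left_ne_zero_of_mul hn
    rw [coe_Icc]
    exact ⟨not_lt.1 fun h ↦ hA (isingHamiltonian_eq_zero_of_lt_of_lt (hS k hk) h hkm),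
      not_lt.1 fun h ↦ hA (isingHamiltonian_eq_zero_of_gt_of_gt (hS l hl) h hml)⟩
  refine ⟨(Icc k l).finite_toSet.subset hsupp, ?_⟩
  rw [finsum_eq_sum_of_support_subset _ hsupp,
    sum_Icc_eq_sum_Ico_add_add_sum_Ioc hkm.le hml.le,
    sum_isingHamiltonian_Ico hSC hS (hS k hk) hkm, isingHamiltonian_self,
    sum_isingHamiltonian_Ioc hSC hS (hS l hl) hml, bondWave_eq_mul_siteWave hS,
    bondWave_add_one_eq_mul_siteWave hS]
  linear_combination -C m * S m * siteWave s S z m * z.inv_mul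

end Hamiltonian

lemma xvec_eq_cosh_mul_siteWave (M N : ℤ) (γ : ℤ → ℂ) (z : ℂˣ) (n : ℤ) :
    xvec M N γ z n =
      Complex.cosh (γ n) * siteWave (Icc M N) (fun j ↦ Complex.sinh (γ j)) z n := by
  simp only [xvec, siteWave, Units.val_zpow_eq_zpow_val, Units.val_inv_eq_inv_val, mul_assoc]

lemma prod_Ioo_neg {K : Type*} [Field K] (S : ℤ → K) {m n : ℤ} (h : m < n) :
    ∏ j ∈ Ioo m n, -S j = (-1) ^ (n - m - 1) * ∏ j ∈ Ioo m n, S j := by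
  rw [prod_neg, Int.card_Ioo, ← zpow_natCast, Int.toNat_of_nonneg (by lia)]

lemma Amat_eq_isingHamiltonian (γ : ℤ → ℂ) (m n : ℤ) :
    Amat γ m n =
      isingHamiltonian (fun j ↦ Complex.sinh (γ j)) (fun j ↦ Complex.cosh (γ j)) m n := by
  simp only [Amat, Icc_add_one_sub_one_eq_Ioo]
  rcases lt_trichotomy n m with h | rfl | h
  · rw [isingHamiltonian_of_lt h, if_pos h]
  · simp [isingHamiltonian_self]
  · rw [isingHamiltonian_of_gt h, if_neg h.not_gt, if_neg h.ne, prod_Ioo_neg _ h]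
    ring

/-- The eigenvector relation `Σₙ A_{mn} xₙ = (z + z⁻¹) xₘ` diagonalizing the
inhomogeneous critical Ising (XY) chain. -/
theorem Amat_eigenvector (M N : ℤ) (hMN : M ≤ N) (γ : ℤ → ℂ)
    (hγ : ∀ j : ℤ, j ∉ Finset.Icc M N → γ j = 0) (z : ℂ) (hz : z ≠ 0) (m : ℤ) :
    (Function.support (fun n : ℤ => Amat γ m n * xvec M N γ z n)).Finite ∧
    ∑ᶠ n : ℤ, Amat γ m n * xvec M N γ z n = (z + z⁻¹) * xvec M N γ z m := by
  lift z to ℂˣ using hz.isUnit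
  simp only [Amat_eq_isingHamiltonian, xvec_eq_cosh_mul_siteWave, ← Units.val_inv_eq_inv_val]
  exact Amat_eigenvector_general (fun n ↦ (Complex.cosh_sq (γ n)).trans (add_comm _ _))
    (fun j hj ↦ by rw [hγ j hj, Complex.sinh_zero]) z m
end

section
/- Let m < n be integers and S_m, S_{m+1}, …, S_n pairwise distinct real numbers in (−1,1). Set C_j = √(1+S_j²), B_j = (1+iS_j)/(1−iS_j), β_j = 2i·arctan S_j, and B_j^{1/2} = (1+iS_j)/C_j (so that (B_j^{1/2})² = B_j). Then (1/2π)·∫_{π/2}^{3π/2} ( C_m/(1+S_m e^{−iθ}) ) · ∏_{j=m+1}^{n−1} ( (1−S_j e^{iθ})/(1+S_j e^{−iθ}) ) · ( C_n/(1+S_n e^{−iθ}) ) · e^{−i(n−m)θ} dθ = (i^{m−n−1}/π)·B_m^{1/2}·B_n^{1/2}·Σ_{j=m}^{n} β_j · ∏_{l=m+1}^{n−1}(B_j+B_l) / ∏_{l=m, l≠j}^{n}(B_j−B_l). -/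
open Finset

/-- `B = (1+iS)/(1-iS)`, the vertical spectral parameter `e^β` with `β = 2i·arctan S`. -/
noncomputable def Bspec (S : ℝ) : ℂ := (1 + Complex.I * S) / (1 - Complex.I * S)

/-!
With `z = e^{iθ}` the integrand is `C_m C_n · z · R(z)`, where `R` is a rational function with
simple poles at the points `-S_j`. Since `dz = i z dθ`, the integral of `z / (z - p)` over the left
half of the unit circle is a difference of logarithms, namely `π - 2 arctan p` for a real pole
`p > -1`. By Lagrange interpolation `R` is the sum of its principal parts, and since its denominator
exceeds its numerator by two degrees, its residues add up to zero: the contributions of `π` cancel,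
and only the arctangents survive. Finally `B_j + B_l` and `B_j - B_l` are proportional to
`1 + S_j S_l` and `S_l - S_j`, which turns the residues of `R` into the coefficients of `β_j`.
-/

section PartialFractions

open Polynomial Lagrange

variable {ι K : Type*} [DecidableEq ι] [Field K] {t : Finset ι} {v : ι → K} {P : K[X]}

lemma eval_div_eval_nodal_eq_sum {x : K} (hv : Set.InjOn v t) (hP : P.degree < #t)
    (hx : ∀ i ∈ t, x ≠ v i) :
    P.eval x / (nodal t v).eval x = ∑ i ∈ t, nodalWeight t v i * P.eval (v i) / (x - v i) := by
  have hnodal : (nodal t v).eval x ≠ 0 := eval_nodal_not_at_node hx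
  rw [div_eq_iff hnodal, mul_comm]
  conv_lhs => rw [eq_interpolate hv hP, eval_interpolate_not_at_node _ hx]
  congr! 2 with i
  ring

lemma sum_nodalWeight_mul_eval_eq_zero (hv : Set.InjOn v t) (hP : P.natDegree + 1 < #t) :
    ∑ i ∈ t, nodalWeight t v i * P.eval (v i) = 0 := by
  have hdegree : P.degree < #t :=
    degree_le_natDegree.trans_lt (by exact_mod_cast (Nat.lt_succ_self _).trans hP)
  calc ∑ i ∈ t, nodalWeight t v i * P.eval (v i)
      = ∑ i ∈ t, P.eval (v i) / ∏ j ∈ t.erase i, (v i - v j) := by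
        simp only [nodalWeight, prod_inv_distrib, div_eq_inv_mul]
    _ = P.coeff (#t - 1) := (coeff_eq_sum hv hdegree).symm
    _ = 0 := coeff_eq_zero_of_natDegree_lt (by omega)

end PartialFractions

section LeftArc

open Complex
open scoped Real

lemma arg_ofReal_add_I (p : ℝ) : arg (p + I) = π / 2 - Real.arctan p := by
  have hr : (0 : ℝ) < √(1 + p ^ 2) := by positivity
  have hrℂ : ((√(1 + p ^ 2) : ℝ) : ℂ) ≠ 0 := ofReal_ne_zero.2 hr.ne'
  have hpolar : (p + I : ℂ) = (√(1 + p ^ 2) : ℝ) *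
      (cos (π / 2 - Real.arctan p : ℝ) + sin (π / 2 - Real.arctan p : ℝ) * I) := by
    rw [← ofReal_cos, ← ofReal_sin, Real.cos_pi_div_two_sub, Real.sin_pi_div_two_sub,
      Real.sin_arctan, Real.cos_arctan]
    push_cast
    field_simp
  rw [hpolar, arg_mul_cos_add_sin_mul_I hr]
  constructor <;>
    linarith [Real.neg_pi_div_two_lt_arctan p, Real.arctan_lt_pi_div_two p, Real.pi_pos]

lemma log_ofReal_add_I_sub_log_ofReal_sub_I (p : ℝ) :
    log (p + I) - log (p - I) = (π - 2 * Real.arctan p) * I := by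
  have harg : arg (p + I) ≠ π := by simp [arg_eq_pi_iff]
  have hconj : (p - I : ℂ) = starRingEnd ℂ (p + I) := by simp [sub_eq_add_neg]
  rw [hconj, log_conj _ harg, sub_conj, log_im, arg_ofReal_add_I]
  push_cast
  ring

lemma ofReal_sub_exp_mem_slitPlane {p θ : ℝ} (hp : -1 < p)
    (hθ : θ ∈ Set.Icc (π / 2) (3 * π / 2)) :
    p - exp (I * θ) ∈ slitPlane := by
  have hcos : Real.cos θ ≤ 0 :=
    Real.cos_nonpos_of_pi_div_two_le_of_le hθ.1 (by linarith [hθ.2])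
  rw [mul_comm, mem_slitPlane_iff, sub_re, sub_im, exp_ofReal_mul_I_re, exp_ofReal_mul_I_im,
    ofReal_re, ofReal_im]
  by_contra! h
  have hsin : Real.sin θ = 0 := by linarith [h.2]
  have hsq : Real.cos θ ^ 2 = 1 := by simpa [hsin] using Real.sin_sq_add_cos_sq θ
  nlinarith [h.1]

lemma exp_sub_ofReal_ne_zero {p θ : ℝ} (hp : -1 < p) (hθ : θ ∈ Set.Icc (π / 2) (3 * π / 2)) :
    exp (I * θ) - p ≠ 0 := by
  rw [← neg_ne_zero, neg_sub]
  exact slitPlane_ne_zero (ofReal_sub_exp_mem_slitPlane hp hθ)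

lemma uIcc_pi_div_two_three_pi_div_two :
    Set.uIcc (π / 2) (3 * π / 2) = Set.Icc (π / 2) (3 * π / 2) :=
  Set.uIcc_of_le (by linarith [Real.pi_pos])

lemma intervalIntegrable_leftArc_exp_div_exp_sub {p : ℝ} (hp : -1 < p) :
    IntervalIntegrable (fun θ : ℝ => exp (I * θ) / (exp (I * θ) - p)) MeasureTheory.volume
      (π / 2) (3 * π / 2) := by
  refine (ContinuousOn.div (by fun_prop) (by fun_prop) fun θ hθ => ?_).intervalIntegrable
  exact exp_sub_ofReal_ne_zero hp (uIcc_pi_div_two_three_pi_div_two ▸ hθ)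

theorem integral_leftArc_exp_div_exp_sub {p : ℝ} (hp : -1 < p) :
    ∫ θ in π / 2..3 * π / 2, exp (I * θ) / (exp (I * θ) - p) = π - 2 * Real.arctan p := by
  have hderiv : ∀ θ ∈ Set.uIcc (π / 2) (3 * π / 2), HasDerivAt
      (fun θ : ℝ => -I * log (p - exp (I * θ))) (exp (I * θ) / (exp (I * θ) - p)) θ := by
    intro θ hθ
    rw [uIcc_pi_div_two_three_pi_div_two] at hθ
    have hexp : HasDerivAt (fun θ : ℝ => exp (I * θ)) (exp (I * θ) * (I * 1)) θ :=
      (ofRealCLM.hasDerivAt.const_mul I).cexp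
    refine (((hexp.const_sub (p : ℂ)).clog_real
      (ofReal_sub_exp_mem_slitPlane hp hθ)).const_mul (-I)).congr_deriv ?_
    rw [← neg_sub (exp (I * θ)) (p : ℂ), neg_div_neg_eq]
    linear_combination (-exp (I * θ) / (exp (I * θ) - p)) * I_sq
  have hstart : exp (I * (π / 2 : ℝ)) = I := by
    rw [mul_comm]; push_cast; exact exp_pi_div_two_mul_I
  have hend : exp (I * (3 * π / 2 : ℝ)) = -I := by
    rw [show I * (3 * π / 2 : ℝ) = π / 2 * I + π * I by push_cast; ring, exp_add_pi_mul_I,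
      exp_pi_div_two_mul_I]
  rw [intervalIntegral.integral_eq_sub_of_hasDerivAt hderiv
    (intervalIntegrable_leftArc_exp_div_exp_sub hp), hstart, hend, sub_neg_eq_add, ← mul_sub,
    log_ofReal_add_I_sub_log_ofReal_sub_I]
  linear_combination (-(π - 2 * Real.arctan p : ℂ)) * I_sq

open Polynomial Lagrange in
theorem integral_leftArc_exp_mul_eval_div_eval_nodal {ι : Type*} [DecidableEq ι] {t : Finset ι}
    {p : ι → ℝ} {P : ℂ[X]} (hp : ∀ i ∈ t, -1 < p i) (hinj : Set.InjOn p t)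
    (hP : P.natDegree + 1 < #t) :
    ∫ θ in π / 2..3 * π / 2,
        exp (I * θ) * (P.eval (exp (I * θ)) / (nodal t fun i => (p i : ℂ)).eval (exp (I * θ)))
      = -2 * ∑ i ∈ t, nodalWeight t (fun i => (p i : ℂ)) i * P.eval (p i : ℂ) *
          Real.arctan (p i) := by
  set v : ι → ℂ := fun i => p i
  have hv : Set.InjOn v t := ofReal_injective.comp_injOn hinj
  have hdegree : P.degree < #t :=
    degree_le_natDegree.trans_lt (by exact_mod_cast (Nat.lt_succ_self _).trans hP)
  calc ∫ θ in π / 2..3 * π / 2,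
        exp (I * θ) * (P.eval (exp (I * θ)) / (nodal t v).eval (exp (I * θ)))
      = ∫ θ in π / 2..3 * π / 2,
          ∑ i ∈ t, nodalWeight t v i * P.eval (v i) * (exp (I * θ) / (exp (I * θ) - p i)) := by
        refine intervalIntegral.integral_congr fun θ hθ => ?_
        rw [uIcc_pi_div_two_three_pi_div_two] at hθ
        have hne : ∀ i ∈ t, exp (I * θ) ≠ v i := fun i hi =>
          sub_ne_zero.1 (exp_sub_ofReal_ne_zero (hp i hi) hθ)
        simp only [eval_div_eval_nodal_eq_sum hv hdegree hne, mul_sum]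
        exact sum_congr rfl fun i _ => by ring
    _ = ∑ i ∈ t, nodalWeight t v i * P.eval (v i) * (π - 2 * Real.arctan (p i)) := by
        rw [intervalIntegral.integral_finsetSum fun i hi =>
          (intervalIntegrable_leftArc_exp_div_exp_sub (hp i hi)).const_mul _]
        refine sum_congr rfl fun i hi => ?_
        rw [intervalIntegral.integral_const_mul, integral_leftArc_exp_div_exp_sub (hp i hi)]
    _ = (∑ i ∈ t, nodalWeight t v i * P.eval (v i)) * π
          - 2 * ∑ i ∈ t, nodalWeight t v i * P.eval (v i) * Real.arctan (p i) := by
        rw [sum_mul, mul_sum, ← sum_sub_distrib]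
        exact sum_congr rfl fun i _ => by ring
    _ = -2 * ∑ i ∈ t, nodalWeight t v i * P.eval (v i) * Real.arctan (p i) := by
        rw [sum_nodalWeight_mul_eval_eq_zero hv hP]
        ring

end LeftArc

/-- The residue at `z = -S j` of the rational function
`(∏ l ∈ u, (1 - S l * z)) / ∏ l ∈ t, (z + S l)`, for `j ∈ t` and pairwise distinct `S l`: the nodal
weight of the pole is the reciprocal of the product of `S l - S j` over the other `l ∈ t`. -/
noncomputable def poleResidue {ι K : Type*} [DecidableEq ι] [Field K] (u t : Finset ι) (S : ι → K)
    (j : ι) : K :=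
  (∏ l ∈ u, (1 + S j * S l)) * Lagrange.nodalWeight t (fun l => -S l) j

section Residues

open Complex
open scoped Real

variable {ι : Type*} {u t : Finset ι} {S : ι → ℝ}

open Polynomial in
theorem integral_leftArc_prod_div_prod [DecidableEq ι] (hS : ∀ j ∈ t, S j < 1)
    (hinj : Set.InjOn S t) (hcard : #u + 1 < #t) :
    ∫ θ in π / 2..3 * π / 2, exp (I * θ) *
        ((∏ l ∈ u, (1 - S l * exp (I * θ))) / ∏ l ∈ t, (exp (I * θ) + S l))
      = 2 * ∑ j ∈ t, poleResidue u t (fun l => (S l : ℂ)) j * Real.arctan (S j) := by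
  let P : ℂ[X] := ∏ l ∈ u, (C (-(S l : ℂ)) * X + C 1)
  have hP : P.natDegree + 1 < #t := by
    have : P.natDegree ≤ #u := (natDegree_prod_le _ _).trans <|
      (sum_le_card_nsmul _ _ 1 fun l _ => natDegree_linear_le).trans (by simp)
    omega
  have heval (z : ℂ) : P.eval z = ∏ l ∈ u, (1 - S l * z) := by
    rw [eval_prod]
    exact prod_congr rfl fun l _ => by simp only [eval_add, eval_mul, eval_C, eval_X]; ring
  have h := integral_leftArc_exp_mul_eval_div_eval_nodal (p := fun l => -S l)
    (fun j hj => neg_lt_neg (hS j hj)) (neg_injective.comp_injOn hinj) hP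
  simp only [heval, Lagrange.eval_nodal, ofReal_neg, sub_neg_eq_add, Real.arctan_neg] at h
  rw [h, mul_sum, mul_sum]
  refine sum_congr rfl fun j _ => ?_
  simp only [poleResidue, mul_neg, sub_neg_eq_add, mul_comm (S j : ℂ)]
  ring

lemma one_sub_I_mul_ofReal_ne_zero (s : ℝ) : 1 - I * s ≠ 0 := fun h => by
  simpa using congrArg re h

lemma Bspec_add_Bspec (a b : ℝ) :
    Bspec a + Bspec b = 2 * (1 + a * b) / ((1 - I * a) * (1 - I * b)) := by
  have ha := one_sub_I_mul_ofReal_ne_zero a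
  have hb := one_sub_I_mul_ofReal_ne_zero b
  unfold Bspec
  field_simp
  linear_combination (-2 * a * b : ℂ) * I_sq

lemma Bspec_sub_Bspec (a b : ℝ) :
    Bspec a - Bspec b = -2 * I * (-a - -b) / ((1 - I * a) * (1 - I * b)) := by
  have ha := one_sub_I_mul_ofReal_ne_zero a
  have hb := one_sub_I_mul_ofReal_ne_zero b
  unfold Bspec
  field_simp
  ring

lemma prod_Bspec_add_Bspec (a : ℝ) :
    ∏ l ∈ u, (Bspec a + Bspec (S l)) =
      2 ^ #u * (∏ l ∈ u, (1 + a * S l : ℂ)) / ((1 - I * a) ^ #u * ∏ l ∈ u, (1 - I * S l)) := by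
  simp only [Bspec_add_Bspec, prod_div_distrib, prod_mul_distrib, prod_const]

lemma prod_Bspec_sub_Bspec (a : ℝ) :
    ∏ l ∈ u, (Bspec a - Bspec (S l)) =
      (-2 * I) ^ #u * (∏ l ∈ u, (-a - -S l : ℂ)) /
        ((1 - I * a) ^ #u * ∏ l ∈ u, (1 - I * S l)) := by
  simp only [Bspec_sub_Bspec, prod_div_distrib, prod_mul_distrib, prod_const, mul_pow]

lemma prod_Bspec_add_div_prod_Bspec_sub [DecidableEq ι] (hcard : #t = #u + 2) {j : ι}
    (hj : j ∈ t) :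
    (∏ l ∈ u, (Bspec (S j) + Bspec (S l))) / ∏ l ∈ t.erase j, (Bspec (S j) - Bspec (S l))
      = I ^ (#u + 1) / 2 * ((∏ l ∈ t, (1 - I * S l)) / ∏ l ∈ u, (1 - I * S l)) *
          poleResidue u t (fun l => (S l : ℂ)) j := by
  have hcard_erase : #(t.erase j) = #u + 1 := by rw [card_erase_of_mem hj, hcard]; rfl
  have hj0 := one_sub_I_mul_ofReal_ne_zero (S j)
  have hu0 : ∏ l ∈ u, (1 - I * S l) ≠ 0 :=
    prod_ne_zero_iff.2 fun l _ => one_sub_I_mul_ofReal_ne_zero _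
  have ht0 : ∏ l ∈ t.erase j, (1 - I * S l) ≠ 0 :=
    prod_ne_zero_iff.2 fun l _ => one_sub_I_mul_ofReal_ne_zero _
  have hconst : I ^ (#u + 1) / 2 = 2 ^ #u / (-2 * I) ^ (#u + 1) := by
    rw [div_eq_div_iff two_ne_zero (pow_ne_zero _ (by simp)), ← mul_pow, ← pow_succ]
    congr 1
    linear_combination (-2 : ℂ) * I_sq
  rw [prod_Bspec_add_Bspec, prod_Bspec_sub_Bspec, hcard_erase, hconst, poleResidue,
    Lagrange.nodalWeight, prod_inv_distrib, ← mul_prod_erase t _ hj]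
  generalize 1 - I * (S j : ℂ) = d at hj0 ⊢
  field_simp
  ring

end Residues

section Chain

open Complex
open scoped Real

variable {m n : ℤ}

lemma prod_Icc_eq_mul_prod_mul {M : Type*} [CommMonoid M] (hmn : m < n) (f : ℤ → M) :
    ∏ j ∈ Icc m n, f j = f m * (∏ j ∈ Icc (m + 1) (n - 1), f j) * f n := by
  rw [Icc_add_one_sub_one_eq_Ioo, mul_prod_Ioo_eq_prod_Ico hmn, prod_Ico_mul_eq_prod_Icc hmn.le]

lemma card_Icc_add_one_sub_one (hmn : m < n) : (#(Icc (m + 1) (n - 1)) : ℤ) = n - m - 1 := by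
  rw [Int.card_Icc_of_le _ _ (by omega)]
  ring

lemma card_Icc_eq_card_Icc_add_one_sub_one_add_two (hmn : m < n) :
    #(Icc m n) = #(Icc (m + 1) (n - 1)) + 2 := by
  simp only [Int.card_Icc]
  omega

lemma endpoints_mul_prod_mul_zpow_eq {K : Type*} [Field K] (hmn : m < n) (S : ℤ → K) (a b : K)
    {z : K} (hz : z ≠ 0) :
    a / (1 + S m * z⁻¹) * (∏ j ∈ Icc (m + 1) (n - 1), (1 - S j * z) / (1 + S j * z⁻¹)) *
        (b / (1 + S n * z⁻¹)) * z ^ (m - n)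
      = a * b *
          (z * ((∏ j ∈ Icc (m + 1) (n - 1), (1 - S j * z)) / ∏ j ∈ Icc m n, (z + S j))) := by
  have hfactor (s : K) : 1 + s * z⁻¹ = (z + s) / z := by field_simp
  have hpow : z ^ (m - n) = (z ^ (#(Icc (m + 1) (n - 1)) + 1))⁻¹ := by
    rw [← zpow_natCast, ← zpow_neg]
    congr 1
    have := card_Icc_add_one_sub_one hmn
    omega
  simp only [hfactor, hpow, prod_Icc_eq_mul_prod_mul hmn, prod_div_distrib, prod_const,
    pow_succ]
  field_simp

lemma fermion_integrand_eq (hmn : m < n) (S : ℤ → ℝ) (a b : ℂ) (θ : ℝ) :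
    a / (1 + S m * exp (-I * θ)) *
        (∏ j ∈ Icc (m + 1) (n - 1), (1 - S j * exp (I * θ)) / (1 + S j * exp (-I * θ))) *
        (b / (1 + S n * exp (-I * θ))) * exp (-I * (n - m) * θ)
      = a * b * (exp (I * θ) *
          ((∏ j ∈ Icc (m + 1) (n - 1), (1 - S j * exp (I * θ))) /
            ∏ j ∈ Icc m n, (exp (I * θ) + S j))) := by
  have hinv : exp (-I * θ) = (exp (I * θ))⁻¹ := by rw [neg_mul, exp_neg]
  have hzpow : exp (-I * (n - m) * θ) = exp (I * θ) ^ (m - n) := by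
    rw [← exp_int_mul]; push_cast; ring_nf
  rw [hinv, hzpow, endpoints_mul_prod_mul_zpow_eq hmn (fun j => (S j : ℂ)) a b (exp_ne_zero _)]

lemma sum_beta_mul_prod_Bspec_div_prod_Bspec (hmn : m < n) (S : ℤ → ℝ) :
    ∑ j ∈ Icc m n, 2 * I * Real.arctan (S j) *
        (∏ l ∈ Icc (m + 1) (n - 1), (Bspec (S j) + Bspec (S l))) /
          (∏ l ∈ (Icc m n).erase j, (Bspec (S j) - Bspec (S l)))
      = I ^ (n - m + 1) * ((1 - I * S m) * (1 - I * S n)) *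
          ∑ j ∈ Icc m n, poleResidue (Icc (m + 1) (n - 1)) (Icc m n) (fun l => (S l : ℂ)) j *
            Real.arctan (S j) := by
  have hne : ∏ l ∈ Icc (m + 1) (n - 1), (1 - I * S l) ≠ 0 :=
    prod_ne_zero_iff.2 fun l _ => one_sub_I_mul_ofReal_ne_zero _
  have hends : (∏ l ∈ Icc m n, (1 - I * S l)) / ∏ l ∈ Icc (m + 1) (n - 1), (1 - I * S l)
      = (1 - I * S m) * (1 - I * S n) := by
    rw [prod_Icc_eq_mul_prod_mul hmn]
    field_simp
  have hpow : I ^ (n - m + 1) = I * I ^ (#(Icc (m + 1) (n - 1)) + 1) := by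
    rw [← pow_succ', ← zpow_natCast]
    congr 1
    have := card_Icc_add_one_sub_one hmn
    omega
  rw [mul_sum]
  refine sum_congr rfl fun j hj => ?_
  rw [mul_div_assoc, prod_Bspec_add_div_prod_Bspec_sub
    (card_Icc_eq_card_Icc_add_one_sub_one_add_two hmn) hj, hends, hpow]
  ring

lemma one_add_I_mul_div_sqrt (s : ℝ) :
    (1 + I * s) / (√(1 + s ^ 2) : ℂ) = √(1 + s ^ 2) / (1 - I * s) := by
  have hsqrt : (√(1 + s ^ 2) : ℂ) ≠ 0 := ofReal_ne_zero.2 (by positivity)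
  have hsq : (√(1 + s ^ 2) : ℂ) * √(1 + s ^ 2) = 1 + (s : ℂ) ^ 2 := by
    exact_mod_cast Real.mul_self_sqrt (by positivity : 0 ≤ 1 + s ^ 2)
  rw [div_eq_div_iff hsqrt (one_sub_I_mul_ofReal_ne_zero s), hsq]
  linear_combination (-(s : ℂ) ^ 2) * I_sq

end Chain

theorem fermion_two_point_general (m n : ℤ) (hmn : m < n) (S : ℤ → ℝ)
    (hS : ∀ j ∈ Finset.Icc m n, S j < 1)
    (hdist : Set.InjOn S (Set.Icc m n)) :
    (1 / (2 * (Real.pi : ℂ))) *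
      ∫ θ in (Real.pi / 2)..(3 * Real.pi / 2),
        ((Real.sqrt (1 + S m ^ 2) : ℂ) / (1 + (S m : ℂ) * Complex.exp (-Complex.I * θ))) *
        (∏ j ∈ Finset.Icc (m + 1) (n - 1),
          ((1 - (S j : ℂ) * Complex.exp (Complex.I * θ)) /
            (1 + (S j : ℂ) * Complex.exp (-Complex.I * θ)))) *
        ((Real.sqrt (1 + S n ^ 2) : ℂ) / (1 + (S n : ℂ) * Complex.exp (-Complex.I * θ))) *
        Complex.exp (-Complex.I * ((n : ℂ) - (m : ℂ)) * θ)
      = Complex.I ^ (m - n - 1) / (Real.pi : ℂ) *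
          ((1 + Complex.I * S m) / (Real.sqrt (1 + S m ^ 2) : ℂ)) *
          ((1 + Complex.I * S n) / (Real.sqrt (1 + S n ^ 2) : ℂ)) *
          ∑ j ∈ Finset.Icc m n,
            (2 * Complex.I * (Real.arctan (S j) : ℂ)) *
              (∏ l ∈ Finset.Icc (m + 1) (n - 1), (Bspec (S j) + Bspec (S l))) /
              (∏ l ∈ (Finset.Icc m n).erase j, (Bspec (S j) - Bspec (S l))) := by
  have hcard := card_Icc_eq_card_Icc_add_one_sub_one_add_two hmn
  have hinj : Set.InjOn S (Finset.Icc m n) := by rwa [Finset.coe_Icc]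
  have hpow : Complex.I ^ (m - n - 1) * Complex.I ^ (n - m + 1) = 1 := by
    rw [← zpow_add₀ Complex.I_ne_zero, show m - n - 1 + (n - m + 1) = 0 by ring, zpow_zero]
  have hm := one_sub_I_mul_ofReal_ne_zero (S m)
  have hn := one_sub_I_mul_ofReal_ne_zero (S n)
  have hpi : (Real.pi : ℂ) ≠ 0 := Complex.ofReal_ne_zero.2 Real.pi_ne_zero
  simp only [fermion_integrand_eq hmn S]
  rw [intervalIntegral.integral_const_mul, integral_leftArc_prod_div_prod hS hinj (by omega),
    sum_beta_mul_prod_Bspec_div_prod_Bspec hmn, one_add_I_mul_div_sqrt, one_add_I_mul_div_sqrt]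
  field_simp
  rw [mul_assoc _ (Complex.I ^ (m - n - 1)), hpow, mul_one]

/-- The two-point function `⟨vac|ψ*ₘψₙ|vac⟩` of the free fermions diagonalizing the
inhomogeneous critical Ising (XY) transfer matrix, evaluated by residue calculus. -/
theorem fermion_two_point (m n : ℤ) (hmn : m < n) (S : ℤ → ℝ)
    (hS : ∀ j ∈ Finset.Icc m n, S j ∈ Set.Ioo (-1 : ℝ) 1)
    (hdist : Set.InjOn S (Set.Icc m n)) :
    (1 / (2 * (Real.pi : ℂ))) *
      ∫ θ in (Real.pi / 2)..(3 * Real.pi / 2),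
        ((Real.sqrt (1 + S m ^ 2) : ℂ) / (1 + (S m : ℂ) * Complex.exp (-Complex.I * θ))) *
        (∏ j ∈ Finset.Icc (m + 1) (n - 1),
          ((1 - (S j : ℂ) * Complex.exp (Complex.I * θ)) /
            (1 + (S j : ℂ) * Complex.exp (-Complex.I * θ)))) *
        ((Real.sqrt (1 + S n ^ 2) : ℂ) / (1 + (S n : ℂ) * Complex.exp (-Complex.I * θ))) *
        Complex.exp (-Complex.I * ((n : ℂ) - (m : ℂ)) * θ)
      = Complex.I ^ (m - n - 1) / (Real.pi : ℂ) *
          ((1 + Complex.I * S m) / (Real.sqrt (1 + S m ^ 2) : ℂ)) *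
          ((1 + Complex.I * S n) / (Real.sqrt (1 + S n ^ 2) : ℂ)) *
          ∑ j ∈ Finset.Icc m n,
            (2 * Complex.I * (Real.arctan (S j) : ℂ)) *
              (∏ l ∈ Finset.Icc (m + 1) (n - 1), (Bspec (S j) + Bspec (S l))) /
              (∏ l ∈ (Finset.Icc m n).erase j, (Bspec (S j) - Bspec (S l))) :=
  fermion_two_point_general m n hmn S (fun j hj => (hS j hj).2) hdist
end

section
/- Let λ be a real number with 0 < |λ| < 2. Then ∫_{−∞}^{∞} e^{λα}/cosh²α dα = πλ/sin(πλ/2). -/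
/-!
The substitution `x = sigmoid (2 * α) = exp α / (2 * cosh α)`, for which
`1 - x = exp (-α) / (2 * cosh α)`, turns the beta integral `B(u, v)` into
`2 * ∫ α, exp ((u - v) * α) / (2 * cosh α) ^ (u + v)`. At `u = 1 + z / 2`, `v = 1 - z / 2` the beta
function is `Γ(1 + z / 2) * Γ(1 - z / 2)`, which Euler's reflection formula evaluates.
-/

open Real Set MeasureTheory

theorem sigmoid_two_mul (x : ℝ) : sigmoid (2 * x) = exp x / (2 * cosh x) := by
  have hexp : exp (-(2 * x)) * exp x = exp (-x) := by rw [← exp_add]; ring_nf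
  have hcosh : 2 * cosh x = (1 + exp (-(2 * x))) * exp x := by rw [cosh_eq, add_mul, hexp]; ring
  rw [sigmoid_def, hcosh, div_mul_cancel_right₀ (exp_pos x).ne']

theorem setIntegral_Ioo_zero_one_eq_integral_sigmoid {E : Type*} [NormedAddCommGroup E]
    [NormedSpace ℝ E] (f : ℝ → E) :
    ∫ x in Ioo 0 1, f x = ∫ t, (sigmoid t * (1 - sigmoid t)) • f (sigmoid t) := by
  rw [← range_sigmoid, ← image_univ, integral_image_eq_integral_deriv_smul_of_monotoneOn
    MeasurableSet.univ (fun t _ ↦ (hasDerivAt_sigmoid t).hasDerivWithinAt)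
    (sigmoid_monotone.monotoneOn univ), setIntegral_univ]

theorem betaIntegral_eq_integral_sigmoid (u v : ℂ) :
    Complex.betaIntegral u v = ∫ t, (sigmoid t : ℂ) ^ u * (sigmoid (-t) : ℂ) ^ v := by
  rw [Complex.betaIntegral, intervalIntegral.integral_of_le zero_le_one,
    integral_Ioc_eq_integral_Ioo, setIntegral_Ioo_zero_one_eq_integral_sigmoid]
  refine integral_congr_ae (.of_forall fun t ↦ ?_)
  have hpos : (sigmoid t : ℂ) ≠ 0 := mod_cast (sigmoid_pos t).ne'
  have hneg : (sigmoid (-t) : ℂ) ≠ 0 := mod_cast (sigmoid_pos (-t)).ne'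
  have hsub : 1 - (sigmoid t : ℂ) = sigmoid (-t) := mod_cast (sigmoid_neg t).symm
  simp only [← sigmoid_neg, hsub, Complex.real_smul, Complex.ofReal_mul,
    Complex.cpow_sub _ _ hpos, Complex.cpow_sub _ _ hneg, Complex.cpow_one]
  field_simp

theorem sigmoid_two_mul_cpow (x : ℝ) (z : ℂ) :
    (sigmoid (2 * x) : ℂ) ^ z = Complex.exp (z * x) / (2 * Complex.cosh x) ^ z := by
  rw [sigmoid_two_mul, Complex.ofReal_div,
    Complex.div_cpow_ofReal_nonneg (exp_pos x).le (by positivity),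
    Complex.cpow_def_of_ne_zero (mod_cast (exp_pos x).ne'), ← Complex.ofReal_log (exp_pos x).le,
    log_exp, mul_comm z]
  push_cast
  rfl

theorem betaIntegral_eq_integral_exp_div_cosh_cpow (u v : ℂ) :
    Complex.betaIntegral u v =
      2 * ∫ x : ℝ, Complex.exp ((u - v) * x) / (2 * Complex.cosh x) ^ (u + v) := by
  have integrand_eq (x : ℝ) : (sigmoid (2 * x) : ℂ) ^ u * (sigmoid (-(2 * x)) : ℂ) ^ v =
      Complex.exp ((u - v) * x) / (2 * Complex.cosh x) ^ (u + v) := by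
    have hcosh : 2 * Complex.cosh x ≠ 0 := mod_cast (by positivity : 2 * cosh x ≠ 0)
    rw [← mul_neg, sigmoid_two_mul_cpow, sigmoid_two_mul_cpow, Complex.ofReal_neg,
      Complex.cosh_neg, div_mul_div_comm, ← Complex.exp_add, ← Complex.cpow_add _ _ hcosh]
    ring_nf
  simp_rw [← integrand_eq]
  rw [Measure.integral_comp_mul_left (fun t ↦ (sigmoid t : ℂ) ^ u * (sigmoid (-t) : ℂ) ^ v),
    betaIntegral_eq_integral_sigmoid, abs_of_pos (by norm_num), Complex.real_smul]
  push_cast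
  ring

theorem betaIntegral_one_add_one_sub {s : ℂ} (hs : s ≠ 0) (hre : |s.re| < 1) :
    Complex.betaIntegral (1 + s) (1 - s) = π * s / Complex.sin (π * s) := by
  obtain ⟨hlower, hupper⟩ := abs_lt.mp hre
  rw [Complex.betaIntegral_eq_Gamma_mul_div _ _ (by simpa using by linarith) (by simpa),
    add_add_sub_cancel, one_add_one_eq_two, Complex.Gamma_ofNat_eq_factorial, add_comm 1 s,
    Complex.Gamma_add_one s hs, mul_assoc, Complex.Gamma_mul_Gamma_one_sub]
  simp only [Nat.factorial_one, Nat.cast_one, div_one]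
  ring

theorem exp_div_cosh_sq_integral_general {z : ℂ} (h0 : z ≠ 0) (h2 : |z.re| < 2) :
    ∫ α : ℝ, Complex.exp (z * α) / Complex.cosh α ^ 2 = π * z / Complex.sin (π * z / 2) := by
  have hre : |(z / 2).re| < 1 := by
    rw [Complex.div_ofNat_re, abs_div, abs_two]
    linarith
  calc ∫ α : ℝ, Complex.exp (z * α) / Complex.cosh α ^ 2
      = 4 * ∫ α : ℝ, Complex.exp (z * α) / (2 * Complex.cosh α) ^ 2 := by
        rw [← integral_const_mul]
        congr with α
        ring
    _ = 2 * Complex.betaIntegral (1 + z / 2) (1 - z / 2) := by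
        rw [betaIntegral_eq_integral_exp_div_cosh_cpow, add_add_sub_cancel, one_add_one_eq_two,
          show 1 + z / 2 - (1 - z / 2) = z by ring]
        simp only [Complex.cpow_ofNat]
        ring
    _ = π * z / Complex.sin (π * z / 2) := by
        rw [betaIntegral_one_add_one_sub (div_ne_zero h0 two_ne_zero) hre, ← mul_div_assoc (π : ℂ)]
        ring

/-- `∫_{-∞}^{∞} e^{λα}/cosh²α dα = πλ/sin(πλ/2)` for `0 < |λ| < 2`. -/
theorem exp_div_cosh_sq_integral (l : ℝ) (h0 : 0 < |l|) (h2 : |l| < 2) :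
    ∫ α : ℝ, Real.exp (l * α) / Real.cosh α ^ 2
      = Real.pi * l / Real.sin (Real.pi * l / 2) := by
  exact_mod_cast exp_div_cosh_sq_integral_general (z := l) (mod_cast abs_pos.mp h0) h2
end

section
/- For ν ∈ (0,1), the function I(ν) = ∫₀^∞ sinh((1−ν)t)/(sinh t·cosh(νt)) dt is well defined (the improper integral converges absolutely) and differentiable on (0,1), with I′(ν) = −∫₀^∞ t·cosh t/(sinh t·cosh²(νt)) dt. -/
/-!
The addition formula `cosh ((1 - x) t) cosh (x t) + sinh ((1 - x) t) sinh (x t) = cosh t` gives the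
integrand of `I` the `x`-derivative `-t cosh t / (sinh t cosh² (x t))`. For `x > a > 0` this is
dominated by a multiple of `exp (-a t)`, since `t cosh t ≤ (1 + t) sinh t`. The integrand vanishes
at `x = 1`, so by the mean value inequality the same bound makes it integrable for every `x > a`,
and dominated convergence allows differentiation under the integral sign.
-/

open MeasureTheory

theorem integrable_of_norm_hasDerivWithinAt_le {α 𝕜 E : Type*} [MeasurableSpace α] {μ : Measure α}
    [RCLike 𝕜] [NormedAddCommGroup E] [NormedSpace 𝕜 E] {F F' : 𝕜 → α → E} {bound : α → ℝ}
    {s : Set 𝕜} {x₀ x : 𝕜} (hs : Convex ℝ s) (hx₀ : x₀ ∈ s) (hx : x ∈ s)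
    (hF_meas : AEStronglyMeasurable (F x) μ) (hF_int : Integrable (F x₀) μ)
    (h_bound : ∀ᵐ a ∂μ, ∀ y ∈ s, ‖F' y a‖ ≤ bound a) (bound_integrable : Integrable bound μ)
    (h_diff : ∀ᵐ a ∂μ, ∀ y ∈ s, HasDerivWithinAt (F · a) (F' y a) s y) :
    Integrable (F x) μ := by
  have h_sub : Integrable (F x - F x₀) μ := by
    refine (bound_integrable.mul_const ‖x - x₀‖).mono' (hF_meas.sub hF_int.1) ?_
    filter_upwards [h_bound, h_diff] with a ha_bound ha_diff
    exact hs.norm_image_sub_le_of_norm_hasDerivWithin_le ha_diff ha_bound hx₀ hx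
  simpa using h_sub.add hF_int

section Hyperbolic

open Real

theorem exp_div_two_le_cosh (x : ℝ) : exp x / 2 ≤ cosh x := by
  rw [cosh_eq]
  linarith [exp_pos (-x)]

theorem mul_cosh_le_one_add_mul_sinh {t : ℝ} (ht : 0 ≤ t) : t * cosh t ≤ (1 + t) * sinh t := by
  have h_sinh : t ≤ sinh t := self_le_sinh_iff.2 ht
  have h_cosh : cosh t ≤ 1 + sinh t := by
    rw [← sub_le_iff_le_add, cosh_sub_sinh]
    exact exp_le_one_iff.2 (neg_nonpos.2 ht)
  calc t * cosh t ≤ t * (1 + sinh t) := by gcongr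
    _ ≤ (1 + t) * sinh t := by linarith

theorem one_add_le_one_add_inv_mul_exp {a t : ℝ} (ha : 0 < a) (ht : 0 ≤ t) :
    1 + t ≤ (1 + a⁻¹) * exp (a * t) := by
  have h_one : 1 ≤ exp (a * t) := one_le_exp (by positivity)
  have h_self : t ≤ a⁻¹ * exp (a * t) := by
    rw [le_inv_mul_iff₀ ha]
    linarith [add_one_le_exp (a * t)]
  linarith

theorem mul_cosh_div_sinh_mul_cosh_sq_le {a x t : ℝ} (ha : 0 < a) (hax : a ≤ x) (ht : 0 < t) :
    t * cosh t / (sinh t * cosh (x * t) ^ 2) ≤ 4 * (1 + a⁻¹) * exp (-a * t) := by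
  have h_cosh : exp (a * t) / 2 ≤ cosh (x * t) :=
    calc exp (a * t) / 2 ≤ exp (x * t) / 2 := by gcongr
      _ ≤ cosh (x * t) := exp_div_two_le_cosh _
  calc t * cosh t / (sinh t * cosh (x * t) ^ 2)
      ≤ (1 + t) * sinh t / (sinh t * cosh (x * t) ^ 2) := by
        gcongr ?_ / _
        exact mul_cosh_le_one_add_mul_sinh ht.le
    _ = (1 + t) / cosh (x * t) ^ 2 := by
        rw [mul_comm (1 + t), mul_div_mul_left _ _ (sinh_pos_iff.2 ht).ne']
    _ ≤ (1 + a⁻¹) * exp (a * t) / (exp (a * t) / 2) ^ 2 := by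
        gcongr
        exact one_add_le_one_add_inv_mul_exp ha ht.le
    _ = 4 * (1 + a⁻¹) * exp (-a * t) := by
        rw [neg_mul, exp_neg]
        field_simp
        norm_num

theorem cosh_one_sub_mul_mul_cosh_add_sinh_mul_sinh (x t : ℝ) :
    cosh ((1 - x) * t) * cosh (x * t) + sinh ((1 - x) * t) * sinh (x * t) = cosh t := by
  rw [← cosh_add]
  ring_nf

theorem hasDerivAt_sinh_one_sub_mul_div_sinh_mul_cosh {t : ℝ} (ht : t ≠ 0) (x : ℝ) :
    HasDerivAt (fun y ↦ sinh ((1 - y) * t) / (sinh t * cosh (y * t)))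
      (-(t * cosh t / (sinh t * cosh (x * t) ^ 2))) x := by
  have h_sinh : sinh t ≠ 0 := sinh_eq_zero.not.2 ht
  have h_cosh : cosh (x * t) ≠ 0 := (cosh_pos _).ne'
  have h_num : HasDerivAt (fun y ↦ sinh ((1 - y) * t)) (cosh ((1 - x) * t) * (-1 * t)) x :=
    (((hasDerivAt_id x).const_sub 1).mul_const t).sinh
  have h_den : HasDerivAt (fun y ↦ sinh t * cosh (y * t)) (sinh t * (sinh (x * t) * (1 * t))) x :=
    ((hasDerivAt_id x).mul_const t).cosh.const_mul (sinh t)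
  refine (h_num.div h_den (mul_ne_zero h_sinh h_cosh)).congr_deriv ?_
  rw [← cosh_one_sub_mul_mul_cosh_add_sinh_mul_sinh x t]
  field_simp
  ring

end Hyperbolic

theorem ground_state_integral_deriv_general {ν : ℝ} (hν : 0 < ν) :
    IntegrableOn
        (fun t : ℝ => Real.sinh ((1 - ν) * t) / (Real.sinh t * Real.cosh (ν * t)))
        (Set.Ioi 0) ∧
      HasDerivAt
        (fun ν' : ℝ =>
          ∫ t in Set.Ioi (0 : ℝ), Real.sinh ((1 - ν') * t) / (Real.sinh t * Real.cosh (ν' * t)))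
        (-∫ t in Set.Ioi (0 : ℝ), t * Real.cosh t / (Real.sinh t * Real.cosh (ν * t) ^ 2))
        ν := by
  let F (x t : ℝ) : ℝ := Real.sinh ((1 - x) * t) / (Real.sinh t * Real.cosh (x * t))
  let F' (x t : ℝ) : ℝ := -(t * Real.cosh t / (Real.sinh t * Real.cosh (x * t) ^ 2))
  obtain ⟨a, ha, ha_lt⟩ := exists_between (lt_min hν one_pos)
  obtain ⟨haν, ha_one⟩ := lt_min_iff.1 ha_lt
  have hF_meas (x : ℝ) : AEStronglyMeasurable (F x) (volume.restrict (Set.Ioi 0)) :=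
    Measurable.aestronglyMeasurable (by fun_prop)
  have hF'_meas : AEStronglyMeasurable (F' ν) (volume.restrict (Set.Ioi 0)) :=
    Measurable.aestronglyMeasurable (by fun_prop)
  have hF_one : IntegrableOn (F 1) (Set.Ioi 0) := by simp [F]
  have h_diff : ∀ᵐ t ∂volume.restrict (Set.Ioi 0), ∀ x ∈ Set.Ioi a,
      HasDerivAt (F · t) (F' x t) x := by
    filter_upwards [ae_restrict_mem measurableSet_Ioi] with t ht x _
    exact hasDerivAt_sinh_one_sub_mul_div_sinh_mul_cosh (ne_of_gt ht) x
  have h_bound : ∀ᵐ t ∂volume.restrict (Set.Ioi 0), ∀ x ∈ Set.Ioi a,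
      ‖F' x t‖ ≤ 4 * (1 + a⁻¹) * Real.exp (-a * t) := by
    filter_upwards [ae_restrict_mem measurableSet_Ioi] with t (ht : 0 < t) x hx
    rw [norm_neg, Real.norm_of_nonneg (by positivity)]
    exact mul_cosh_div_sinh_mul_cosh_sq_le ha (le_of_lt hx) ht
  have h_exp : IntegrableOn (fun t ↦ 4 * (1 + a⁻¹) * Real.exp (-a * t)) (Set.Ioi 0) :=
    (exp_neg_integrableOn_Ioi 0 ha).const_mul _
  have hF_int : IntegrableOn (F ν) (Set.Ioi 0) :=
    integrable_of_norm_hasDerivWithinAt_le (convex_Ioi a) ha_one haν (hF_meas ν) hF_one h_bound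
      h_exp (h_diff.mono fun t ht x hx ↦ (ht x hx).hasDerivWithinAt)
  refine ⟨hF_int, ?_⟩
  rw [← integral_neg]
  exact (hasDerivAt_integral_of_dominated_loc_of_deriv_le (Ioi_mem_nhds haν) (.of_forall hF_meas)
    hF_int hF'_meas h_bound h_exp h_diff).2

/-- The function `I(ν) = ∫₀^∞ sinh((1-ν)t)/(sinh t cosh νt) dt` is well defined and
differentiable on `(0,1)`, with `I'(ν) = -∫₀^∞ t cosh t/(sinh t cosh²νt) dt`. -/
theorem ground_state_integral_deriv :
    ∀ ν ∈ Set.Ioo (0 : ℝ) 1,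
      IntegrableOn
        (fun t : ℝ => Real.sinh ((1 - ν) * t) / (Real.sinh t * Real.cosh (ν * t)))
        (Set.Ioi 0) ∧
      HasDerivAt
        (fun ν' : ℝ =>
          ∫ t in Set.Ioi (0 : ℝ), Real.sinh ((1 - ν') * t) / (Real.sinh t * Real.cosh (ν' * t)))
        (-∫ t in Set.Ioi (0 : ℝ), t * Real.cosh t / (Real.sinh t * Real.cosh (ν * t) ^ 2))
        ν :=
  fun _ hν ↦ ground_state_integral_deriv_general hν.1
end

section
/- Let r ≥ 1, let ω₁, …, ω_r be positive real numbers, let x > 0 be real, and let s ∈ ℂ with Re s > r. Then the family ( (x + n₁ω₁ + ⋯ + n_rω_r)^{−s} )_{(n₁,…,n_r) ∈ ℕ^r} is summable, defining the multiple Hurwitz zeta function ζ_r(s, x | ω₁,…,ω_r), and for each index i (1 ≤ i ≤ r) the difference equation ζ_r(s, x | ω) − ζ_r(s, x+ω_i | ω) = ζ_{r−1}(s, x | ω(i)) holds, where ω(i) = (ω₁,…,ω_{i−1},ω_{i+1},…,ω_r) and ζ₀(s,x) = x^{−s}. -/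
/-- The multiple Hurwitz zeta function
`ζ_r(s, x | ω) = Σ_{n ∈ ℕ^r} (x + n·ω)^{-s}` (principal complex power). -/
noncomputable def mzeta (r : ℕ) (s : ℂ) (x : ℝ) (ω : Fin r → ℝ) : ℂ :=
  ∑' n : Fin r → ℕ, ((x + ∑ i, (n i : ℝ) * ω i : ℝ) : ℂ) ^ (-s)

/-!
With `p = Re s > r`, bounding `x + n·ω` below by each of its parts `x + nᵢωᵢ` gives
`(x + n·ω)^{-p} ≤ ∏ᵢ (x + nᵢωᵢ)^{-p/r}`, so the series is dominated by a product of `r`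
convergent one-variable Hurwitz series of exponent `p/r > 1`. The shift `x ↦ x + ωᵢ` of the
argument is the shift `n ↦ n + eᵢ` of the index, so the difference retains exactly the
terms with `nᵢ = 0`.
-/

section Summability

variable {ι : Type*} [Fintype ι]

lemma summable_prod_apply_of_nonneg {κ : ι → Type*} {f : ∀ i, κ i → ℝ}
    (hf_nonneg : ∀ i k, 0 ≤ f i k) (hf : ∀ i, Summable (f i)) :
    Summable fun k : ∀ i, κ i => ∏ i, f i (k i) := by
  classical
  refine summable_of_sum_le (c := ∏ i, ∑' k, f i k)
    (fun k => Finset.prod_nonneg fun i _ => hf_nonneg i (k i)) fun u => ?_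
  let box := Fintype.piFinset fun i => u.image fun k => k i
  have subset_box : u ⊆ box := fun k hk =>
    Fintype.mem_piFinset.2 fun i => Finset.mem_image_of_mem (fun k => k i) hk
  calc ∑ k ∈ u, ∏ i, f i (k i)
      ≤ ∑ k ∈ box, ∏ i, f i (k i) :=
        Finset.sum_le_sum_of_subset_of_nonneg subset_box fun k _ _ =>
          Finset.prod_nonneg fun i _ => hf_nonneg i (k i)
    _ = ∏ i, ∑ j ∈ u.image fun k => k i, f i j := (Finset.prod_univ_sum _ _).symm
    _ ≤ ∏ i, ∑' j, f i j :=
        Finset.prod_le_prod (fun i _ => Finset.sum_nonneg fun j _ => hf_nonneg i j)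
          fun i _ => (hf i).sum_le_tsum _ fun j _ => hf_nonneg i j

lemma summable_rpow_add_nat_mul {x a p : ℝ} (hx : 0 ≤ x) (ha : 0 < a) (hp : 1 < p) :
    Summable fun n : ℕ => (x + n * a) ^ (-p) := by
  refine (((Real.summable_one_div_nat_add_rpow (x / a) p).2 hp).mul_left (a ^ (-p))).congr
    fun n => ?_
  have hn : 0 ≤ n + x / a := by positivity
  rw [abs_of_nonneg hn, one_div, ← Real.rpow_neg hn, ← Real.mul_rpow ha.le hn]
  congr 1
  field_simp
  ring

lemma rpow_neg_add_sum_le_prod [Nonempty ι] {x p : ℝ} (hx : 0 < x) (hp : 0 ≤ p) {y : ι → ℝ}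
    (hy : ∀ i, 0 ≤ y i) :
    (x + ∑ i, y i) ^ (-p) ≤ ∏ i, (x + y i) ^ (-(p / Fintype.card ι)) := by
  have hsum : 0 ≤ x + ∑ i, y i := add_nonneg hx.le (Finset.sum_nonneg fun i _ => hy i)
  calc (x + ∑ i, y i) ^ (-p)
      = ∏ _i : ι, (x + ∑ j, y j) ^ (-(p / Fintype.card ι)) := by
        rw [Finset.prod_const, Finset.card_univ, ← Real.rpow_mul_natCast hsum, neg_mul,
          div_mul_cancel₀ p (Nat.cast_ne_zero.2 Fintype.card_ne_zero)]
    _ ≤ ∏ i, (x + y i) ^ (-(p / Fintype.card ι)) := by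
        refine Finset.prod_le_prod (fun i _ => Real.rpow_nonneg hsum _) fun i _ => ?_
        refine Real.rpow_le_rpow_of_nonpos (add_pos_of_pos_of_nonneg hx (hy i)) ?_
          (neg_nonpos.2 (by positivity))
        gcongr
        exact Finset.single_le_sum (fun j _ => hy j) (Finset.mem_univ i)

variable {ω : ι → ℝ} {x : ℝ}

lemma summable_rpow_add_sum_mul (hω : ∀ i, 0 < ω i) (hx : 0 < x) {p : ℝ}
    (hp : Fintype.card ι < p) :
    Summable fun n : ι → ℕ => (x + ∑ i, n i * ω i) ^ (-p) := by
  cases isEmpty_or_nonempty ι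
  · exact .of_finite
  have one_lt_exponent : 1 < p / Fintype.card ι :=
    (one_lt_div (Nat.cast_pos.2 Fintype.card_pos)).2 hp
  have dominant_summable :=
    summable_prod_apply_of_nonneg (f := fun i (k : ℕ) => (x + k * ω i) ^ (-(p / Fintype.card ι)))
      (fun i k => have := hω i; by positivity)
      fun i => summable_rpow_add_nat_mul hx.le (hω i) one_lt_exponent
  have nonneg (n : ι → ℕ) (i : ι) : 0 ≤ n i * ω i := mul_nonneg (n i).cast_nonneg (hω i).le
  exact dominant_summable.of_nonneg_of_le
    (fun n => Real.rpow_nonneg (add_nonneg hx.le (Finset.sum_nonneg fun i _ => nonneg n i)) _)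
    fun n => rpow_neg_add_sum_le_prod hx ((Nat.cast_nonneg _).trans hp.le) (nonneg n)

lemma summable_cpow_add_sum_mul (hω : ∀ i, 0 < ω i) (hx : 0 < x) {s : ℂ}
    (hs : Fintype.card ι < s.re) :
    Summable fun n : ι → ℕ => ((x + ∑ i, n i * ω i : ℝ) : ℂ) ^ (-s) := by
  refine .of_norm ((summable_rpow_add_sum_mul hω hx hs).congr fun n => ?_)
  have base_pos : 0 < x + ∑ i, n i * ω i :=
    add_pos_of_pos_of_nonneg hx
      (Finset.sum_nonneg fun i _ => mul_nonneg (n i).cast_nonneg (hω i).le)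
  rw [Complex.norm_cpow_eq_rpow_re_of_pos base_pos, Complex.neg_re]

end Summability

section Difference

variable {r : ℕ}

lemma compl_range_add_single_one (i : Fin (r + 1)) :
    (Set.range fun n : Fin (r + 1) → ℕ => n + Pi.single i 1)ᶜ =
      Set.range (i.insertNth (α := fun _ => ℕ) 0) := by
  ext n
  constructor
  · intro hn
    refine ⟨i.removeNth n, Fin.insertNth_eq_iff.2 ⟨?_, rfl⟩⟩
    by_contra! h
    refine hn ⟨n - Pi.single i 1, tsub_add_cancel_of_le ?_⟩
    exact update_le_iff.2 ⟨Nat.one_le_iff_ne_zero.2 h.symm, fun j _ => Nat.zero_le (n j)⟩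
  · rintro ⟨m, rfl⟩ ⟨n, hn⟩
    simpa using congrFun hn i

lemma tsum_sub_tsum_add_single_one {E : Type*} [AddCommGroup E] [UniformSpace E]
    [IsUniformAddGroup E] [CompleteSpace E] [T2Space E] {f : (Fin (r + 1) → ℕ) → E}
    (hf : Summable f) (i : Fin (r + 1)) :
    ∑' n, f n - ∑' n : Fin (r + 1) → ℕ, f (n + Pi.single i 1) =
      ∑' n : Fin r → ℕ, f (i.insertNth 0 n) := by
  rw [← hf.tsum_subtype_add_tsum_subtype_compl
      (Set.range fun n : Fin (r + 1) → ℕ => n + Pi.single i 1),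
    compl_range_add_single_one, tsum_range f (add_left_injective _),
    tsum_range f (Fin.insertNth_right_injective 0), add_sub_cancel_left]

lemma mzeta_sub_mzeta_add {s : ℂ} {x : ℝ} {ω : Fin (r + 1) → ℝ}
    (h : Summable fun n : Fin (r + 1) → ℕ => ((x + ∑ i, n i * ω i : ℝ) : ℂ) ^ (-s))
    (i : Fin (r + 1)) :
    mzeta (r + 1) s x ω - mzeta (r + 1) s (x + ω i) ω = mzeta r s x (ω ∘ i.succAbove) := by
  have shift_argument (n : Fin (r + 1) → ℕ) :
      x + ω i + ∑ j, n j * ω j = x + ∑ j, ((n + Pi.single i 1 : Fin (r + 1) → ℕ) j : ℝ) * ω j := by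
    simp [add_mul, Finset.sum_add_distrib, Pi.single_apply, add_assoc, add_comm]
  have drop_index (n : Fin r → ℕ) :
      ∑ j, (i.insertNth (α := fun _ => ℕ) 0 n j : ℝ) * ω j = ∑ j, n j * ω (i.succAbove j) := by
    simp [Fin.sum_univ_succAbove _ i]
  simpa only [mzeta, shift_argument, drop_index, Function.comp_apply]
    using tsum_sub_tsum_add_single_one h i

end Difference

/-- Summability of the multiple Hurwitz zeta series for `Re s > r`, together with the
difference equation `ζ_r(s,x|ω) - ζ_r(s,x+ωᵢ|ω) = ζ_{r-1}(s,x|ω(i))` (stated here with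
`r + 1` frequencies, so that `r + 1 ≥ 1`; for `r = 0` the right-hand side is `x^{-s}`). -/
theorem mzeta_summable_and_difference (r : ℕ) (ω : Fin (r + 1) → ℝ)
    (hω : ∀ i, 0 < ω i) (x : ℝ) (hx : 0 < x) (s : ℂ) (hs : ((r : ℝ) + 1) < s.re) :
    Summable (fun n : Fin (r + 1) → ℕ => ((x + ∑ i, (n i : ℝ) * ω i : ℝ) : ℂ) ^ (-s)) ∧
    ∀ i : Fin (r + 1),
      mzeta (r + 1) s x ω - mzeta (r + 1) s (x + ω i) ω
        = mzeta r s x (ω ∘ i.succAbove) := by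
  have series_summable :
      Summable fun n : Fin (r + 1) → ℕ => ((x + ∑ i, n i * ω i : ℝ) : ℂ) ^ (-s) :=
    summable_cpow_add_sum_mul hω hx (by simpa using hs)
  exact ⟨series_summable, mzeta_sub_mzeta_add series_summable⟩
end
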